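/- arXiv:1312.2495 — 3 statements merged into one kernel-verified Lean document; each statement's English description precedes it below -/
import Mathlib

section
/- The comultiplication preserves the α–f† exchange relation: for all p, p', k ∈ ι one has Δα p k * Δf⋆ p' = g p p' • (Δf⋆ p' * Δα p k) in H₁ ⊗[ℂ] H₂. -/
open scoped TensorProduct

/-!
Expanding both sides, it suffices to show that each of the two kinds of summands of `Δα p k`
commutes up to the factor `g p p'` with each of the three kinds of summands of `Δf⋆ p'`. Four of
the six cases are immediate from the relations. The other two,
`(β ⊗ β⋆)(α⋆ ⊗ f⋆)` and `(β ⊗ β⋆)(β⋆ ⊗ f)`, use the exchange of `β` with `α⋆` and of `f` with `β⋆`.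
These come from applying `star` to a relation, so their coefficient is `star (q • 1)` instead of
`q • 1`. Nothing says that `q` is real, nor that the star is conjugate-linear: `z = star (q • 1)`
is merely a central element. The two cases are rescued by the following consequences of the
relations, valid in each `Hᵢ`.

* `z f_p = q f_p` for every `p` (`MRelations.starC_q_smul_f`). The relation for `f f⋆` and its star
  show that `z - q` kills `f⋆ f + ∑ β⋆ β`, so that modulo the annihilator of `z - q` one has
  `f f⋆ = 1 - ∑ α α⋆` and `f⋆ f = - ∑ β⋆ β`. Moving `α`, `f` and `β` past these identities
  successively gives `f α = 0`, `f f⋆ f = f`, `f β = 0`, and finally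
  `f = f f⋆ f = - ∑ f β⋆ β = - z ∑ β⋆ f β = 0`.
* If `q² ≠ 1`, then `f_{p'} β_{pk} = 0` (`MRelations.f_mul_β_eq_zero`). After multiplication by
  `f_{p'}` one may replace `z` by `q`, and moving `β` past the relation for `f f⋆` leads to
  `f β = q² f β⋆ β β`, and then to `f β β = 0`.

The first fact settles the case with `f` and `β⋆`. In the case with `α⋆` and `f⋆`, either `q² = 1`
and `z = q`, or the second tensor factor `β⋆ f⋆ = (f β)⋆` vanishes.

The two facts involve a single row of the families `α` and `β`, and all their coefficients are
central, so they are proved over a commutative ring `R` (later the centre of `H`) for the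
relations `RowRelations` of one row.
-/

/-! ### The relations within one row -/

theorem sum_ite_smul {ι R H : Type*} [DecidableEq ι] [CommRing R] [AddCommGroup H] [Module R H]
    (S : Finset ι) (v : ι → H) (k : ι) (hv : k ∉ S → v k = 0) (x y : R) :
    ∑ l ∈ S, (if k = l then x else y) • v l = y • ∑ l ∈ S, v l + (x - y) • v k := by
  have h : ∀ l, (if k = l then x else y) • v l
      = y • v l + if k = l then (x - y) • v l else 0 := by
    intro l
    split_ifs <;> module
  simp only [h, Finset.sum_add_distrib, ← Finset.smul_sum, Finset.sum_ite_eq]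
  split_ifs with hk
  · rfl
  · simp [hv hk]

section Row
variable {ι R H : Type*} [DecidableEq ι] [CommRing R] [Ring H] [Algebra R H]

/-- The M-relations among the entries `a = α p`, `b = β p`, `f = f p` of a single row `p` and their
stars `as`, `bs`, `fs`, which are treated as independent elements. The coefficients lie in a
commutative ring `R` acting on `H`; `qi` is the inverse of `q`, and `z` is the coefficient that
replaces `q` in the starred relations. The finite set `S` contains the support of the row. -/
structure RowRelations (q qi z : R) (S : Finset ι) (a as b bs : ι → H) (f fs : H) : Prop where
  qqi : q * qi = 1
  a_zero : ∀ k, k ∉ S → a k = 0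
  b_zero : ∀ k, k ∉ S → b k = 0
  a_a : ∀ k l, a k * a l = a l * a k
  a_as : ∀ k l, a k * as l = (if k = l then (1 : R) else q) • (as l * a k)
  a_b : ∀ k l, a k * b l = (if k = l then qi else (1 : R)) • (b l * a k)
  a_bs : ∀ k l, a k * bs l = q • (bs l * a k)
  a_f : ∀ k, a k * f = f * a k
  a_fs : ∀ k, a k * fs = q • (fs * a k)
  b_as : ∀ k l, b k * as l = z • (as l * b k)
  b_b : ∀ k l, b k * b l = b l * b k
  b_bs : ∀ k l, b k * bs l = (if k = l then q * q else q) • (bs l * b k)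
  b_f : ∀ k, b k * f = f * b k
  b_fs : ∀ k, b k * fs = q • (fs * b k)
  f_fs : f * fs - q • (fs * f) = 1 - ∑ k ∈ S, a k * as k + q • ∑ k ∈ S, bs k * b k

namespace RowRelations
variable {q qi z : R} {S : Finset ι} {a as b bs : ι → H} {f fs : H}

theorem a_mul_E (h : RowRelations q qi z S a as b bs f fs) (k : ι) :
    a k * ∑ l ∈ S, a l * as l
      = q • ((∑ l ∈ S, a l * as l) * a k) + (1 - q) • (a k * as k * a k) := by
  rw [Finset.mul_sum, Finset.sum_mul,
    ← sum_ite_smul S (fun l => a l * as l * a k) k (fun hk => by simp [h.a_zero k hk]) 1 q]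
  refine Finset.sum_congr rfl fun l _ => ?_
  rw [← mul_assoc, h.a_a k l, mul_assoc, h.a_as, mul_smul_comm, mul_assoc]

theorem a_mul_N (h : RowRelations q qi z S a as b bs f fs) (k : ι) :
    a k * ∑ l ∈ S, bs l * b l
      = q • ((∑ l ∈ S, bs l * b l) * a k) + (1 - q) • (bs k * b k * a k) := by
  rw [Finset.mul_sum, Finset.sum_mul,
    ← sum_ite_smul S (fun l => bs l * b l * a k) k (fun hk => by simp [h.b_zero k hk]) 1 q]
  refine Finset.sum_congr rfl fun l _ => ?_
  rw [← mul_assoc, h.a_bs, smul_mul_assoc, mul_assoc, h.a_b, mul_smul_comm, smul_smul, mul_assoc]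
  congr 1
  split_ifs <;> simp [h.qqi]

theorem b_mul_a (h : RowRelations q qi z S a as b bs f fs) (k l : ι) :
    b k * a l = (if k = l then q else 1) • (a l * b k) := by
  rw [h.a_b, smul_smul]
  by_cases hk : k = l
  · subst hk; simp [h.qqi]
  · simp [hk, Ne.symm hk]

theorem b_mul_E (h : RowRelations q qi z S a as b bs f fs) (k : ι) :
    b k * ∑ l ∈ S, a l * as l
      = z • ((∑ l ∈ S, a l * as l) * b k) + (q * z - z) • (a k * as k * b k) := by
  rw [Finset.mul_sum, Finset.sum_mul,
    ← sum_ite_smul S (fun l => a l * as l * b k) k (fun hk => by simp [h.a_zero k hk]) (q * z) z]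
  refine Finset.sum_congr rfl fun l _ => ?_
  rw [← mul_assoc, h.b_mul_a, smul_mul_assoc, mul_assoc, h.b_as, mul_smul_comm, smul_smul,
    mul_assoc]
  congr 1
  split_ifs <;> simp

theorem b_mul_N (h : RowRelations q qi z S a as b bs f fs) (k : ι) :
    b k * ∑ l ∈ S, bs l * b l
      = q • ((∑ l ∈ S, bs l * b l) * b k) + (q * q - q) • (bs k * b k * b k) := by
  rw [Finset.mul_sum, Finset.sum_mul,
    ← sum_ite_smul S (fun l => bs l * b l * b k) k (fun hk => by simp [h.b_zero k hk]) (q * q) q]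
  refine Finset.sum_congr rfl fun l _ => ?_
  rw [← mul_assoc, h.b_bs, smul_mul_assoc, mul_assoc, h.b_b, mul_assoc]

theorem a_f_fs (h : RowRelations q qi z S a as b bs f fs) (k : ι) :
    a k * (f * fs) = q • (f * fs * a k) := by
  rw [← mul_assoc, h.a_f, mul_assoc, h.a_fs, mul_smul_comm, mul_assoc]

theorem b_f_fs (h : RowRelations q qi z S a as b bs f fs) (k : ι) :
    b k * (f * fs) = q • (f * fs * b k) := by
  rw [← mul_assoc, h.b_f, mul_assoc, h.b_fs, mul_smul_comm, mul_assoc]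

theorem a_fs_f (h : RowRelations q qi z S a as b bs f fs) (k : ι) :
    a k * (fs * f) = q • (fs * f * a k) := by
  rw [← mul_assoc, h.a_fs, smul_mul_assoc, mul_assoc, h.a_f, mul_assoc]

theorem b_fs_f (h : RowRelations q qi z S a as b bs f fs) (k : ι) :
    b k * (fs * f) = q • (fs * f * b k) := by
  rw [← mul_assoc, h.b_fs, smul_mul_assoc, mul_assoc, h.b_f, mul_assoc]

theorem eq_zero_of_unit_smul {c : R} (hc : IsUnit c) {x : H} (hx : c • x = 0) : x = 0 :=
  (hc.smul_eq_zero).1 hx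

/-- An identity `(z - q) • x = (z - q) • y` is read in the proof as the identity `x = y` modulo the
annihilator of the central element `z - q`. -/
theorem smul_f_eq_zero (h : RowRelations q qi z S a as b bs f fs)
    (hq1 : IsUnit (1 - q)) (hz1 : IsUnit (1 - z))
    (f_as : ∀ k, f * as k = z • (as k * f)) (f_bs : ∀ k, f * bs k = z • (bs k * f))
    (hs : f * fs - z • (fs * f) = 1 - ∑ k ∈ S, a k * as k + z • ∑ k ∈ S, bs k * b k) :
    (z - q) • f = 0 := by
  have hX := h.f_fs
  have hN : (z - q) • (fs * f) = -((z - q) • ∑ k ∈ S, bs k * b k) := by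
    linear_combination (norm := module) hX - hs
  have hY : (z - q) • (f * fs) = (z - q) • (1 - ∑ k ∈ S, a k * as k) := by
    linear_combination (norm := module) (z - q) • hX + q • hN
  -- Modulo the annihilator of `z - q`, `a k` commutes with `f * fs = 1 - ∑ a as` up to `q`.
  have ha : ∀ k, (z - q) • (a k * as k * a k) = (z - q) • a k := by
    intro k
    have e1 := congrArg (fun t => a k * t) hY
    have e2 := congrArg (fun t => t * a k) hY
    have e3 := h.a_f_fs k
    have e4 := h.a_mul_E k
    simp only [mul_smul_comm, smul_mul_assoc, mul_sub, sub_mul, mul_one, one_mul] at e1 e2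
    rw [← sub_eq_zero]
    apply eq_zero_of_unit_smul hq1
    linear_combination (norm := module) e1 - q • e2 - (z - q) • e3 - (z - q) • e4
  -- By `ha`, `f a = f (a as a) = z (a as a) f = z a f = z f a`, and `1 - z` is a unit.
  have hfa : ∀ k, (z - q) • (f * a k) = 0 := by
    intro k
    apply eq_zero_of_unit_smul hz1
    have e1 := congrArg (fun t => f * t) (ha k)
    have e2 := congrArg (fun t => t * f) (ha k)
    have e3 : f * (a k * as k * a k) = z • (a k * as k * a k * f) := by
      rw [← mul_assoc, ← mul_assoc, ← h.a_f, mul_assoc (a k), f_as, mul_smul_comm, smul_mul_assoc,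
        mul_assoc, mul_assoc, mul_assoc, ← h.a_f]
      simp only [mul_assoc]
    simp only [mul_smul_comm, smul_mul_assoc, h.a_f] at e1 e2
    linear_combination (norm := module) z • e2 + (z - q) • e3 - e1
  have hEf : (z - q) • ((∑ k ∈ S, a k * as k) * f) = 0 := by
    rw [Finset.sum_mul, Finset.smul_sum]
    refine Finset.sum_eq_zero fun k _ => ?_
    rw [h.a_as, if_pos rfl, one_smul, mul_assoc, h.a_f, ← mul_smul_comm, hfa, mul_zero]
  have hYf : (z - q) • (f * fs * f) = (z - q) • f := by
    have e1 := congrArg (fun t => t * f) hY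
    simp only [smul_mul_assoc, sub_mul, one_mul] at e1
    linear_combination (norm := module) e1 - hEf
  -- By `hYf`, `b f = b (f fs f) = q (f fs f) b = q f b`, and `1 - q` is a unit.
  have hfb : ∀ k, (z - q) • (f * b k) = 0 := by
    intro k
    apply eq_zero_of_unit_smul hq1
    have e1 := congrArg (fun t => b k * t) hYf
    have e2 := congrArg (fun t => t * b k) hYf
    have e3 : b k * (f * fs * f) = q • (f * fs * f * b k) := by
      rw [← mul_assoc, h.b_f_fs, smul_mul_assoc, mul_assoc, h.b_f, ← mul_assoc]
    simp only [mul_smul_comm, smul_mul_assoc, h.b_f] at e1 e2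
    linear_combination (norm := module) q • e2 + (z - q) • e3 - e1
  have hfN : (z - q) • (f * ∑ k ∈ S, bs k * b k) = 0 := by
    rw [Finset.mul_sum, Finset.smul_sum]
    refine Finset.sum_eq_zero fun k _ => ?_
    rw [← mul_assoc, f_bs, smul_mul_assoc, mul_assoc, smul_comm, ← mul_smul_comm (z - q), hfb,
      mul_zero, smul_zero]
  have e1 := congrArg (fun t => f * t) hN
  simp only [mul_smul_comm, mul_neg, ← mul_assoc] at e1
  linear_combination (norm := module) e1 - hYf - hfN

/-- Comparison of `a k * X` with `q • (X * a k)`, where `X = f * fs - q • (fs * f)`. -/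
theorem a_eq (h : RowRelations q qi z S a as b bs f fs) (hq1 : IsUnit (1 - q)) (k : ι) :
    a k = a k * as k * a k - q • (bs k * b k * a k) := by
  have e1 := congrArg (fun t => a k * t) h.f_fs
  have e2 := congrArg (fun t => t * a k) h.f_fs
  simp only [mul_smul_comm, smul_mul_assoc, mul_sub, sub_mul, mul_add, add_mul, mul_one,
    one_mul] at e1 e2
  rw [← sub_eq_zero]
  apply eq_zero_of_unit_smul hq1
  linear_combination (norm := module) q • e2 - e1 + h.a_f_fs k - q • h.a_fs_f k + h.a_mul_E k
    - q • h.a_mul_N k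

/-- Here `F` is the generator `f p'` of a possibly different row; since `z - q` kills `F`, the
coefficient `z` may be replaced by `q` in any product starting with `F`. -/
theorem F_mul_b_eq_zero (h : RowRelations q qi z S a as b bs f fs)
    (hq1 : IsUnit (1 - q)) (hq2 : IsUnit (1 + q)) {F : H} {y : R}
    (a_F : ∀ k, a k * F = F * a k) (b_F : ∀ k, b k * F = F * b k)
    (F_as : ∀ k, F * as k = y • (as k * F)) (F_bs : ∀ k, F * bs k = y • (bs k * F))
    (hF : (z - q) • F = 0) (k : ι) : F * b k = 0 := by
  have hu : ∀ t, (z - q) • (F * t) = 0 := fun t => by rw [← smul_mul_assoc, hF, zero_mul]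
  -- Comparison of `b k * X` with `q • (X * b k)`, where `X = f * fs - q • (fs * f)`.
  have hb : F * b k = q • (-(F * (a k * as k * b k)) + q • (F * (bs k * b k * b k))) := by
    have e1 := congrArg (fun t => F * (b k * t)) h.f_fs
    have e2 := congrArg (fun t => F * (t * b k)) h.f_fs
    have e3 := congrArg (F * ·) (h.b_f_fs k)
    have e4 := congrArg (F * ·) (h.b_fs_f k)
    have e5 := congrArg (F * ·) (h.b_mul_E k)
    have e6 := congrArg (F * ·) (h.b_mul_N k)
    simp only [mul_smul_comm, smul_mul_assoc, mul_sub, sub_mul, mul_add, add_mul, mul_one,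
      one_mul] at e1 e2 e3 e4 e5 e6
    rw [← sub_eq_zero]
    apply eq_zero_of_unit_smul hq1
    linear_combination (norm := module) q • e2 - e1 + e3 - q • e4 + e5 - q • e6
      + hu ((∑ l ∈ S, a l * as l) * b k) + (q - 1) • hu (a k * as k * b k)
  -- Multiplying `hb` by `a k` and reducing with `a_eq` gives `F a b = - q F a b`.
  have hab : F * (a k * b k) = 0 := by
    apply eq_zero_of_unit_smul hq2
    have e1 := congrArg (fun t => a k * t) hb
    have e2 := congrArg (fun t => F * (t * b k)) (h.a_eq hq1 k)
    have e3 : a k * (F * (a k * as k * b k)) = F * (a k * as k * a k * b k) := by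
      have e6 : as k * a k = a k * as k := by rw [h.a_as, if_pos rfl, one_smul]
      rw [← mul_assoc, a_F, mul_assoc, mul_assoc (a k) (as k) (a k), e6]
      simp only [mul_assoc]
    have e4 : a k * (F * (bs k * b k * b k)) = F * (bs k * b k * a k * b k) := by
      rw [← mul_assoc, a_F, mul_assoc, ← mul_assoc (a k), ← mul_assoc (a k), h.a_bs,
        smul_mul_assoc, mul_assoc (bs k), h.a_b, if_pos rfl, mul_smul_comm, smul_smul, h.qqi,
        one_smul]
      simp only [mul_assoc]
    have e5 : a k * (F * b k) = F * (a k * b k) := by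
      rw [← mul_assoc, a_F, mul_assoc]
    simp only [mul_smul_comm, smul_mul_assoc, mul_sub, sub_mul, mul_add, mul_neg, e3, e4, e5]
      at e1 e2
    linear_combination (norm := module) e1 + q • e2
  have hE : F * (a k * as k * b k) = 0 := by
    rw [h.a_as, if_pos rfl, one_smul, mul_assoc, ← mul_assoc, F_as, smul_mul_assoc, mul_assoc,
      hab, mul_zero, smul_zero]
  have hbN : F * b k = (q * q) • (F * (bs k * b k * b k)) := by
    rw [hE] at hb
    linear_combination (norm := module) hb
  -- Multiplying `hbN` by `b k` on the left gives `F b b = q⁴ F bs b b b`, and on the right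
  -- `F b b = q² F bs b b b`.
  have hbb : F * (b k * b k) = 0 := by
    apply eq_zero_of_unit_smul (hq1.mul hq2)
    have e1 := congrArg (fun t => b k * t) hbN
    have e2 := congrArg (fun t => t * b k) hbN
    have e3 : b k * (F * (bs k * b k * b k)) = (q * q) • (F * (bs k * b k * b k) * b k) := by
      rw [← mul_assoc, b_F, mul_assoc, ← mul_assoc (b k), ← mul_assoc (b k), h.b_bs, if_pos rfl]
      simp only [smul_mul_assoc, mul_smul_comm, mul_assoc]
    have e5 : b k * (F * b k) = F * (b k * b k) := by
      rw [← mul_assoc, b_F, mul_assoc]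
    simp only [mul_smul_comm, smul_mul_assoc, e3, e5, mul_assoc F (b k)] at e1 e2
    linear_combination (norm := module) e1 - (q * q) • e2
  rw [hbN, mul_assoc, ← mul_assoc, F_bs, smul_mul_assoc, mul_assoc, hbb, mul_zero, smul_zero,
    smul_zero]

end RowRelations
end Row

/-! ### Scalars and their stars -/

section Star
variable {H : Type*} [Ring H] [Algebra ℂ H]

/-- The structure map `ℂ → H` with its codomain restricted to the centre. -/
def scalarC (H : Type*) [Ring H] [Algebra ℂ H] : ℂ →+* Subring.center H :=
  (algebraMap ℂ H).codRestrict _ fun c =>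
    Subring.mem_center_iff.2 fun x => (Algebra.commutes c x).symm

/-- The map `c ↦ star (c • 1)`, landing in the centre of `H`. It plays the role of complex
conjugation: the star of `H` is not assumed to be conjugate-linear. -/
def starC (H : Type*) [Ring H] [Algebra ℂ H] [StarRing H] : ℂ →+* Subring.center H where
  toFun c := ⟨star (algebraMap ℂ H c), Subring.mem_center_iff.2 fun x => star_injective (by
    rw [star_mul, star_mul, star_star]; exact Algebra.commutes c (star x))⟩
  map_one' := by ext; simp
  map_zero' := by ext; simp
  map_mul' c d := by
    ext
    simp only [map_mul, star_mul, Subring.coe_mul]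
    rw [← star_mul, ← star_mul, Algebra.commutes]
  map_add' c d := by ext; simp

theorem scalarC_smul (c : ℂ) (x : H) : scalarC H c • x = c • x :=
  (Algebra.smul_def c x).symm

variable [StarRing H]

theorem star_smul_eq (c : ℂ) (x : H) : star (c • x) = starC H c • star x := by
  rw [Algebra.smul_def, Algebra.commutes, star_mul]
  rfl

theorem starC_eq_scalarC {c : ℂ} (hc : c * c = 1) : starC H c = scalarC H c := by
  rcases mul_self_eq_one_iff.1 hc with rfl | rfl <;> simp

end Star

/-! ### Consequences of the M-relations -/

/-- The M-relations for families `α`, `β`, `f` in a star algebra, apart from the formula for the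
commutator of `f p` and `f p'`. The star is an arbitrary involutive
anti-automorphism of rings. -/
structure MRelations {ι H : Type*} [DecidableEq ι] [Ring H] [Algebra ℂ H] [StarRing H]
    (q : ℂ) (g : ι → ι → ℂ) (α β : ι → ι → H) (f : ι → H) : Prop where
  q_ne : q ≠ 0
  g_eq : ∀ p p' : ι, g p p' = if p = p' then q else 1
  α_fin : ∀ p, (Function.support (α p)).Finite
  β_fin : ∀ p, (Function.support (β p)).Finite
  α_α : ∀ p p' k l : ι, α p k * α p' l = α p' l * α p k
  α_αs : ∀ p p' k l : ι, α p k * star (α p' l) = (g p p' * (g k l)⁻¹) • (star (α p' l) * α p k)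
  α_β : ∀ p p' k l : ι, α p k * β p' l = (g k l)⁻¹ • (β p' l * α p k)
  α_βs : ∀ p p' k l : ι, α p k * star (β p' l) = g p p' • (star (β p' l) * α p k)
  α_f : ∀ p p' k : ι, α p k * f p' = f p' * α p k
  α_fs : ∀ p p' k : ι, α p k * star (f p') = g p p' • (star (f p') * α p k)
  β_β : ∀ p p' k l : ι, β p k * β p' l = β p' l * β p k
  β_βs : ∀ p p' k l : ι, β p k * star (β p' l) = (g p p' * g k l) • (star (β p' l) * β p k)
  β_f : ∀ p p' k : ι, β p k * f p' = f p' * β p k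
  β_fs : ∀ p p' k : ι, β p k * star (f p') = g p p' • (star (f p') * β p k)
  f_fs : ∀ p p' : ι, f p * star (f p') - g p p' • (star (f p') * f p)
    = (if p = p' then (1 : ℂ) else 0) • (1 : H) - (∑ᶠ k, α p k * star (α p' k))
      + g p p' • ∑ᶠ k, star (β p' k) * β p k

namespace MRelations
variable {ι H : Type*} [DecidableEq ι] [Ring H] [Algebra ℂ H] [StarRing H]
  {q : ℂ} {g : ι → ι → ℂ} {α β : ι → ι → H} {f : ι → H}

theorem g_ne (h : MRelations q g α β f) (p p' : ι) : g p p' ≠ 0 := by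
  rw [h.g_eq]
  split_ifs
  exacts [h.q_ne, one_ne_zero]

theorem g_self (h : MRelations q g α β f) (p : ι) : g p p = q := by simp [h.g_eq]

theorem f_αs (h : MRelations q g α β f) (p p' k : ι) :
    f p' * star (α p k) = starC H (g p p') • (star (α p k) * f p') := by
  simpa [star_smul_eq] using congrArg star (h.α_fs p p' k)

theorem f_βs (h : MRelations q g α β f) (p p' k : ι) :
    f p' * star (β p k) = starC H (g p p') • (star (β p k) * f p') := by
  simpa [star_smul_eq] using congrArg star (h.β_fs p p' k)

theorem β_αs (h : MRelations q g α β f) (p p' k l : ι) :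
    β p k * star (α p' l) = starC H (g p' p) • (star (α p' l) * β p k) := by
  simpa [star_smul_eq] using congrArg star (h.α_βs p' p l k)

open Classical in
/-- A finite set of indices outside of which the row `p` vanishes. -/
noncomputable def rowSupport (h : MRelations q g α β f) (p : ι) : Finset ι :=
  (h.α_fin p).toFinset ∪ (h.β_fin p).toFinset

theorem α_zero (h : MRelations q g α β f) (p k : ι) (hk : k ∉ h.rowSupport p) : α p k = 0 := by
  simp [rowSupport] at hk
  exact hk.1

theorem β_zero (h : MRelations q g α β f) (p k : ι) (hk : k ∉ h.rowSupport p) : β p k = 0 := by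
  simp [rowSupport] at hk
  exact hk.2

theorem f_fs_self (h : MRelations q g α β f) (p : ι) :
    f p * star (f p) - q • (star (f p) * f p) = 1 - ∑ k ∈ h.rowSupport p, α p k * star (α p k)
      + q • ∑ k ∈ h.rowSupport p, star (β p k) * β p k := by
  have h1 := h.f_fs p p
  rw [h.g_self, if_pos rfl, one_smul, finsum_eq_sum_of_support_subset (s := h.rowSupport p),
    finsum_eq_sum_of_support_subset (s := h.rowSupport p)] at h1
  · exact h1
  · intro k hk
    by_contra hk'
    exact hk (by simp [h.β_zero p k hk'])
  · intro k hk
    by_contra hk'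
    exact hk (by simp [h.α_zero p k hk'])

theorem row (h : MRelations q g α β f) (p : ι) :
    RowRelations (scalarC H q) (scalarC H q⁻¹) (starC H q) (h.rowSupport p) (α p)
      (fun k => star (α p k)) (β p) (fun k => star (β p k)) (f p) (star (f p)) where
  qqi := by rw [← map_mul, mul_inv_cancel₀ h.q_ne, map_one]
  a_zero := h.α_zero p
  b_zero := h.β_zero p
  a_a := h.α_α p p
  a_as k l := by
    rw [h.α_αs, h.g_self, h.g_eq]
    split_ifs <;> simp [scalarC_smul, h.q_ne]
  a_b k l := by
    rw [h.α_β, h.g_eq]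
    split_ifs
    · rw [scalarC_smul]
    · simp
  a_bs k l := by rw [h.α_βs, h.g_self, scalarC_smul]
  a_f := h.α_f p p
  a_fs k := by rw [h.α_fs, h.g_self, scalarC_smul]
  b_as k l := by rw [h.β_αs, h.g_self]
  b_b := h.β_β p p
  b_bs k l := by
    rw [h.β_βs, h.g_self, h.g_eq, ← map_mul]
    split_ifs <;> simp only [scalarC_smul, mul_one]
  b_f := h.β_f p p
  b_fs k := by rw [h.β_fs, h.g_self, scalarC_smul]
  f_fs := by simpa only [scalarC_smul] using h.f_fs_self p

theorem starC_q_smul_f (h : MRelations q g α β f) (p : ι) : starC H q • f p = q • f p := by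
  by_cases hq : q = 1
  · subst hq; simp
  have hu : IsUnit (1 - q) := (sub_ne_zero.2 (Ne.symm hq)).isUnit
  have h0 : (starC H q - scalarC H q) • f p = 0 := by
    apply (h.row p).smul_f_eq_zero
    · simpa using hu.map (scalarC H)
    · simpa using hu.map (starC H)
    · intro k; rw [h.f_αs, h.g_self]
    · intro k; rw [h.f_βs, h.g_self]
    · simpa [star_smul_eq, star_sum] using congrArg star (h.f_fs_self p)
  rwa [sub_smul, sub_eq_zero, scalarC_smul] at h0

theorem starC_g_smul_f (h : MRelations q g α β f) (p p' r : ι) :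
    starC H (g p p') • f r = g p p' • f r := by
  rw [h.g_eq]
  split_ifs
  · exact h.starC_q_smul_f r
  · simp

theorem f_mul_β_eq_zero (h : MRelations q g α β f) (hq : q * q ≠ 1) (p p' k : ι) :
    f p' * β p k = 0 := by
  have h1 : IsUnit (1 - q) := IsUnit.mk0 _ fun e => hq (by linear_combination (-1 - q) * e)
  have h2 : IsUnit (1 + q) := IsUnit.mk0 _ fun e => hq (by linear_combination (q - 1) * e)
  refine (h.row p).F_mul_b_eq_zero (y := starC H (g p p')) ?_ ?_ (h.α_f p p') (h.β_f p p')
    (h.f_αs p p') (h.f_βs p p') ?_ k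
  · simpa using h1.map (scalarC H)
  · simpa using h2.map (scalarC H)
  · rw [sub_smul, h.starC_q_smul_f, scalarC_smul, sub_self]

/-- The coefficient is `g p p'` itself, not its star as in `f_βs`, because `star (q • 1)` and `q`
act in the same way on `f p'`. -/
theorem f_βs' (h : MRelations q g α β f) (p p' k : ι) :
    f p' * star (β p k) = g p p' • (star (β p k) * f p') := by
  rw [h.f_βs, ← mul_smul_comm, h.starC_g_smul_f, mul_smul_comm]

theorem β_αs_of_sq (h : MRelations q g α β f) (hq : q * q = 1) (p p' k l : ι) :
    β p k * star (α p' l) = g p p' • (star (α p' l) * β p k) := by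
  have hg : g p' p * g p' p = 1 := by
    rw [h.g_eq]
    split_ifs <;> simp [hq]
  rw [h.β_αs, starC_eq_scalarC hg, scalarC_smul, h.g_eq, h.g_eq]
  simp only [eq_comm]

theorem βs_fs (h : MRelations q g α β f) (p p' k : ι) :
    star (β p k) * star (f p') = star (f p') * star (β p k) := by
  rw [← star_mul, ← star_mul, h.β_f]

end MRelations

/-! ### The exchange relation in the tensor product -/

theorem finsum_mul_eq_smul {ι A : Type*} [Ring A] [Algebra ℂ A] (c : ℂ) (y : A) (v : ι → A)
    (h : ∀ i, v i * y = c • (y * v i)) : (∑ᶠ i, v i) * y = c • (y * ∑ᶠ i, v i) := by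
  refine finsum_induction (fun x => x * y = c • (y * x)) (by simp) ?_ h
  intro a b ha hb
  rw [add_mul, ha, hb, mul_add, smul_add]

theorem mul_finsum_eq_smul {ι A : Type*} [Ring A] [Algebra ℂ A] (c : ℂ) (x : A) (v : ι → A)
    (h : ∀ i, x * v i = c • (v i * x)) : x * (∑ᶠ i, v i) = c • ((∑ᶠ i, v i) * x) := by
  refine finsum_induction (fun y => x * y = c • (y * x)) (by simp) ?_ h
  intro a b ha hb
  rw [mul_add, ha, hb, add_mul, smul_add]



theorem stmt_8
    {ι : Type*} [DecidableEq ι] (q : ℂ) (hq : q ≠ 0)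
    (g : ι → ι → ℂ) (hg : ∀ p p' : ι, g p p' = if p = p' then q else 1)
    {H₁ : Type*} [Ring H₁] [Algebra ℂ H₁] [StarRing H₁]
    (α₁ β₁ : ι → ι → H₁) (f₁ : ι → H₁)
    (hAfin1 : ∀ p, (Function.support (α₁ p)).Finite)
    (hAfin2 : ∀ p, (Function.support (β₁ p)).Finite)
    (hA1 : ∀ p p' k l : ι, α₁ p k * α₁ p' l = α₁ p' l * α₁ p k)
    (hA2 : ∀ p p' k l : ι, α₁ p k * star (α₁ p' l) = (g p p' * (g k l)⁻¹) • (star (α₁ p' l) * α₁ p k))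
    (hA3 : ∀ p p' k l : ι, α₁ p k * β₁ p' l = (g k l)⁻¹ • (β₁ p' l * α₁ p k))
    (hA4 : ∀ p p' k l : ι, α₁ p k * star (β₁ p' l) = g p p' • (star (β₁ p' l) * α₁ p k))
    (hA5 : ∀ p p' k : ι, α₁ p k * f₁ p' = f₁ p' * α₁ p k)
    (hA6 : ∀ p p' k : ι, α₁ p k * star (f₁ p') = g p p' • (star (f₁ p') * α₁ p k))
    (hA7 : ∀ p p' k l : ι, β₁ p k * β₁ p' l = β₁ p' l * β₁ p k)
    (hA8 : ∀ p p' k l : ι, β₁ p k * star (β₁ p' l) = (g p p' * g k l) • (star (β₁ p' l) * β₁ p k))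
    (hA9 : ∀ p p' k : ι, β₁ p k * f₁ p' = f₁ p' * β₁ p k)
    (hA10 : ∀ p p' k : ι, β₁ p k * star (f₁ p') = g p p' • (star (f₁ p') * β₁ p k))
    (hA11 : ∀ p p' : ι, f₁ p * f₁ p' - f₁ p' * f₁ p = ∑ᶠ k, (α₁ p k * β₁ p' k - α₁ p' k * β₁ p k))
    (hA12 : ∀ p p' : ι, f₁ p * star (f₁ p') - g p p' • (star (f₁ p') * f₁ p)
        = (if p = p' then (1 : ℂ) else 0) • (1 : H₁) - (∑ᶠ k, α₁ p k * star (α₁ p' k))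
          + g p p' • ∑ᶠ k, star (β₁ p' k) * β₁ p k)
    {H₂ : Type*} [Ring H₂] [Algebra ℂ H₂] [StarRing H₂]
    (α₂ β₂ : ι → ι → H₂) (f₂ : ι → H₂)
    (hBfin1 : ∀ p, (Function.support (α₂ p)).Finite)
    (hBfin2 : ∀ p, (Function.support (β₂ p)).Finite)
    (hB1 : ∀ p p' k l : ι, α₂ p k * α₂ p' l = α₂ p' l * α₂ p k)
    (hB2 : ∀ p p' k l : ι, α₂ p k * star (α₂ p' l) = (g p p' * (g k l)⁻¹) • (star (α₂ p' l) * α₂ p k))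
    (hB3 : ∀ p p' k l : ι, α₂ p k * β₂ p' l = (g k l)⁻¹ • (β₂ p' l * α₂ p k))
    (hB4 : ∀ p p' k l : ι, α₂ p k * star (β₂ p' l) = g p p' • (star (β₂ p' l) * α₂ p k))
    (hB5 : ∀ p p' k : ι, α₂ p k * f₂ p' = f₂ p' * α₂ p k)
    (hB6 : ∀ p p' k : ι, α₂ p k * star (f₂ p') = g p p' • (star (f₂ p') * α₂ p k))
    (hB7 : ∀ p p' k l : ι, β₂ p k * β₂ p' l = β₂ p' l * β₂ p k)
    (hB8 : ∀ p p' k l : ι, β₂ p k * star (β₂ p' l) = (g p p' * g k l) • (star (β₂ p' l) * β₂ p k))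
    (hB9 : ∀ p p' k : ι, β₂ p k * f₂ p' = f₂ p' * β₂ p k)
    (hB10 : ∀ p p' k : ι, β₂ p k * star (f₂ p') = g p p' • (star (f₂ p') * β₂ p k))
    (hB11 : ∀ p p' : ι, f₂ p * f₂ p' - f₂ p' * f₂ p = ∑ᶠ k, (α₂ p k * β₂ p' k - α₂ p' k * β₂ p k))
    (hB12 : ∀ p p' : ι, f₂ p * star (f₂ p') - g p p' • (star (f₂ p') * f₂ p)
        = (if p = p' then (1 : ℂ) else 0) • (1 : H₂) - (∑ᶠ k, α₂ p k * star (α₂ p' k))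
          + g p p' • ∑ᶠ k, star (β₂ p' k) * β₂ p k)
    (Dα Dβ Dαs Dβs : ι → ι → H₁ ⊗[ℂ] H₂) (Df Dfs : ι → H₁ ⊗[ℂ] H₂)
    (hDα : ∀ p k : ι, Dα p k = (∑ᶠ η, α₁ p η ⊗ₜ[ℂ] α₂ η k) + ∑ᶠ η, β₁ p η ⊗ₜ[ℂ] star (β₂ η k))
    (hDβ : ∀ p k : ι, Dβ p k = (∑ᶠ η, α₁ p η ⊗ₜ[ℂ] β₂ η k) + ∑ᶠ η, β₁ p η ⊗ₜ[ℂ] star (α₂ η k))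
    (hDf : ∀ p : ι, Df p = (∑ᶠ η, α₁ p η ⊗ₜ[ℂ] f₂ η) + (∑ᶠ η, β₁ p η ⊗ₜ[ℂ] star (f₂ η)) + f₁ p ⊗ₜ[ℂ] 1)
    (hDαs : ∀ p k : ι, Dαs p k = (∑ᶠ η, star (α₁ p η) ⊗ₜ[ℂ] star (α₂ η k)) + ∑ᶠ η, star (β₁ p η) ⊗ₜ[ℂ] β₂ η k)
    (hDβs : ∀ p k : ι, Dβs p k = (∑ᶠ η, star (α₁ p η) ⊗ₜ[ℂ] star (β₂ η k)) + ∑ᶠ η, star (β₁ p η) ⊗ₜ[ℂ] α₂ η k)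
    (hDfs : ∀ p : ι, Dfs p
        = (∑ᶠ η, star (α₁ p η) ⊗ₜ[ℂ] star (f₂ η)) + (∑ᶠ η, star (β₁ p η) ⊗ₜ[ℂ] f₂ η) + star (f₁ p) ⊗ₜ[ℂ] 1) :
    ∀ p p' k : ι, Dα p k * Dfs p' = g p p' • (Dfs p' * Dα p k) := by
  intro p p' k
  have hA : MRelations q g α₁ β₁ f₁ :=
    ⟨hq, hg, hAfin1, hAfin2, hA1, hA2, hA3, hA4, hA5, hA6, hA7, hA8, hA9, hA10, hA12⟩
  have hB : MRelations q g α₂ β₂ f₂ :=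
    ⟨hq, hg, hBfin1, hBfin2, hB1, hB2, hB3, hB4, hB5, hB6, hB7, hB8, hB9, hB10, hB12⟩
  -- The summands of `Dα p k` can be exchanged with `y` one at a time; no finiteness of supports is
  -- needed, since an infinite `finsum` is zero.
  have key : ∀ y : H₁ ⊗[ℂ] H₂,
      (∀ η, (α₁ p η ⊗ₜ[ℂ] α₂ η k) * y = g p p' • (y * (α₁ p η ⊗ₜ[ℂ] α₂ η k))) →
      (∀ η, (β₁ p η ⊗ₜ[ℂ] star (β₂ η k)) * y = g p p' • (y * (β₁ p η ⊗ₜ[ℂ] star (β₂ η k)))) →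
      Dα p k * y = g p p' • (y * Dα p k) := by
    intro y h1 h2
    rw [hDα, add_mul, mul_add, smul_add, finsum_mul_eq_smul _ _ _ h1, finsum_mul_eq_smul _ _ _ h2]
  rw [hDfs, mul_add, mul_add, add_mul, add_mul, smul_add, smul_add]
  congr 1
  · congr 1
    · refine mul_finsum_eq_smul _ _ _ fun μ => key _ (fun η => ?_) (fun η => ?_)
      · rw [Algebra.TensorProduct.tmul_mul_tmul, Algebra.TensorProduct.tmul_mul_tmul, hA2, hB6,
          TensorProduct.smul_tmul_smul, mul_assoc, inv_mul_cancel₀ (hA.g_ne η μ), mul_one]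
      · rw [Algebra.TensorProduct.tmul_mul_tmul, Algebra.TensorProduct.tmul_mul_tmul]
        -- The star of `hA4` has coefficient `star (g p' p • 1)`, which agrees with `g p p'` if
        -- `q ^ 2 = 1`; otherwise the second tensor factor is zero.
        by_cases hqq : q * q = 1
        · rw [hA.β_αs_of_sq hqq, hB.βs_fs, TensorProduct.smul_tmul']
        · rw [hB.βs_fs, ← star_mul, hB.β_f, hB.f_mul_β_eq_zero hqq]
          simp
    · refine mul_finsum_eq_smul _ _ _ fun μ => key _ (fun η => ?_) (fun η => ?_)
      · rw [Algebra.TensorProduct.tmul_mul_tmul, Algebra.TensorProduct.tmul_mul_tmul, hA4, hB5,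
          TensorProduct.smul_tmul']
      · rw [Algebra.TensorProduct.tmul_mul_tmul, Algebra.TensorProduct.tmul_mul_tmul, hA8,
          hB.f_βs', TensorProduct.tmul_smul, ← TensorProduct.smul_tmul', smul_smul]
  · refine key _ (fun η => ?_) (fun η => ?_)
    · rw [Algebra.TensorProduct.tmul_mul_tmul, Algebra.TensorProduct.tmul_mul_tmul, hA6,
        mul_one, one_mul, TensorProduct.smul_tmul']
    · rw [Algebra.TensorProduct.tmul_mul_tmul, Algebra.TensorProduct.tmul_mul_tmul, hA10,
        mul_one, one_mul, TensorProduct.smul_tmul']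
end

section
/- The comultiplication preserves the β–β commutation relation: for all p, p', k, l ∈ ι one has Δβ p k * Δβ p' l = Δβ p' l * Δβ p k in H₁ ⊗[ℂ] H₂. -/
/-!
Expand both products. Terms of the same type commute by the `α`–`α` and `β`–`β` relations, so only
the mixed terms `(α₁ p η ⊗ β₂ η k) * (β₁ p' θ ⊗ star (α₂ θ l))` matter. Moving the left tensor
factors past each other produces `(g η θ)⁻¹`, and one would like the right factors to produce
`g η θ`. Applying `star` to the `α`–`star β` relation gives instead the central element
`z = star (g η θ • 1)`, which differs from `g η θ` in general: `q` need not be real, and no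
compatibility of `star` with scalars is assumed. For `η ≠ θ` or `q = 1` this is harmless.

Let `η = θ` and `q ≠ 1`. The remaining case is settled by consequences of the relation for
`f p * star (f p)`, obtained by moving its two sides past generators.

* If `p ≠ p'`, then `β₁ p' η * α₁ p η = 0` (`other_row_mul_eq_zero`), so both mixed terms vanish.
* If `p = p'` and `k ≠ l`, the expected commutation of `β₂ η k` with `star (α₂ η l)` does hold,
  because `q • 1 - z` annihilates `star (α₂ η l) * β₂ η k` (`same_row_commutation`).
* If `p = p'` and `k = l`, the two elements to be commuted are equal.
-/

open scoped TensorProduct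

/-- A sum is moved past `x` when all summands pick up the factor `d`, except the `k`-th, which
picks up `c`. -/
lemma mul_sum_of_twist {ι H : Type*} [DecidableEq ι] [Ring H] [Algebra ℂ H] (S : Finset ι)
    (k : ι) (hk : k ∈ S) (x : H) (Y W : ι → H) (c d : ℂ)
    (h : ∀ j, x * Y j = (if j = k then c else d) • W j) :
    x * ∑ j ∈ S, Y j = d • ∑ j ∈ S, W j + (c - d) • W k := by
  have h2 : ∀ j, x * Y j = d • W j + if j = k then (c - d) • W j else 0 := by
    intro j
    rw [h j]
    split_ifs <;> module
  simp only [Finset.mul_sum, h2, Finset.sum_add_distrib, Finset.smul_sum]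
  rw [Finset.sum_ite_eq' S k, if_pos hk]

/-- The relation for `f * star f` determines how `a k` and `b'` (an entry of the `k`-th column of
`β` in a different row) are moved past `Y = a k * star (a k) - q • star (b k) * b k`:
`Y * a k = a k` and `b' * Y = 0`. Hence `b' * a k = 0`. -/
lemma other_row_mul_eq_zero {ι H : Type*} [DecidableEq ι] [Ring H] [Algebra ℂ H] [StarRing H]
    (q : ℂ) (hq : q ≠ 0) (hq1 : q ≠ 1) (S : Finset ι) (k : ι) (hk : k ∈ S)
    (a b : ι → H) (f b' : H)
    (haa : ∀ j, a k * a j = a j * a k)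
    (haas : ∀ j, a k * star (a j) = (if j = k then 1 else q) • (star (a j) * a k))
    (hab : ∀ j, a k * b j = (if j = k then q⁻¹ else 1) • (b j * a k))
    (habs : ∀ j, a k * star (b j) = q • (star (b j) * a k))
    (haf : a k * f = f * a k) (hafs : a k * star f = q • (star f * a k))
    (hba : ∀ j, b' * a j = (if j = k then q else 1) • (a j * b'))
    (hbas : ∀ j, b' * star (a j) = star (a j) * b')
    (hbb : ∀ j, b' * b j = b j * b')
    (hbbs : ∀ j, b' * star (b j) = (if j = k then q else 1) • (star (b j) * b'))
    (hbf : b' * f = f * b') (hbfs : b' * star f = star f * b')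
    (hrel : f * star f - q • (star f * f)
      = 1 - (∑ j ∈ S, a j * star (a j)) + q • ∑ j ∈ S, star (b j) * b j) :
    b' * a k = 0 := by
  have hq1' : q - 1 ≠ 0 := sub_ne_zero.mpr hq1
  have e1 := mul_sum_of_twist S k hk (a k) (fun j => a j * star (a j))
    (fun j => a j * star (a j) * a k) 1 q (by
      intro j
      rw [← mul_assoc, haa, mul_assoc, haas, mul_smul_comm, mul_assoc])
  have e2 := mul_sum_of_twist S k hk (a k) (fun j => star (b j) * b j)
    (fun j => star (b j) * b j * a k) 1 q (by
      intro j
      rw [← mul_assoc, habs, smul_mul_assoc, mul_assoc, hab, mul_smul_comm, mul_assoc, smul_smul]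
      split_ifs <;> simp [hq])
  have e3 := mul_sum_of_twist S k hk b' (fun j => a j * star (a j))
    (fun j => a j * star (a j) * b') q 1 (by
      intro j
      rw [← mul_assoc, hba, smul_mul_assoc, mul_assoc, hbas, mul_assoc])
  have e4 := mul_sum_of_twist S k hk b' (fun j => star (b j) * b j)
    (fun j => star (b j) * b j * b') q 1 (by
      intro j
      rw [← mul_assoc, hbbs, smul_mul_assoc, mul_assoc, hbb, mul_assoc])
  rw [← Finset.sum_mul] at e1 e2 e3 e4
  set A := ∑ j ∈ S, a j * star (a j)
  set B := ∑ j ∈ S, star (b j) * b j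
  have f1 : a k * (f * star f - q • (star f * f)) = q • ((f * star f - q • (star f * f)) * a k) := by
    have h1 : a k * (f * star f) = q • (f * star f * a k) := by
      rw [← mul_assoc, haf, mul_assoc, hafs, mul_smul_comm, mul_assoc]
    have h2 : a k * (star f * f) = q • (star f * f * a k) := by
      rw [← mul_assoc, hafs, smul_mul_assoc, mul_assoc, haf, mul_assoc]
    rw [mul_sub, mul_smul_comm, h1, h2, sub_mul, smul_mul_assoc]
    module
  have f2 : b' * (f * star f - q • (star f * f)) = (f * star f - q • (star f * f)) * b' := by
    have h1 : b' * (f * star f) = f * star f * b' := by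
      rw [← mul_assoc, hbf, mul_assoc, hbfs, mul_assoc]
    have h2 : b' * (star f * f) = star f * f * b' := by
      rw [← mul_assoc, hbfs, mul_assoc, hbf, mul_assoc]
    rw [mul_sub, mul_smul_comm, h1, h2, sub_mul, smul_mul_assoc]
  rw [hrel, mul_add, mul_sub, mul_smul_comm, e1, e2, add_mul, sub_mul, smul_mul_assoc, mul_one,
    one_mul] at f1
  rw [hrel, mul_add, mul_sub, mul_smul_comm, e3, e4, add_mul, sub_mul, smul_mul_assoc, mul_one,
    one_mul] at f2
  have g1 : (q - 1) • (a k * star (a k) * a k - q • (star (b k) * b k * a k) - a k) = 0 := by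
    linear_combination (norm := module) (1 : ℂ) • f1
  have g2 : (q - 1) • (a k * star (a k) * b' - q • (star (b k) * b k * b')) = 0 := by
    linear_combination (norm := module) (-1 : ℂ) • f2
  have g1 := (smul_eq_zero_iff_right hq1').mp g1
  have g2 := (smul_eq_zero_iff_right hq1').mp g2
  have h3 : b' * (a k * star (a k)) = q • (a k * star (a k) * b') := by
    rw [← mul_assoc, hba, if_pos rfl, smul_mul_assoc, mul_assoc, hbas, mul_assoc]
  have h4 : b' * (star (b k) * b k) = q • (star (b k) * b k * b') := by
    rw [← mul_assoc, hbbs, if_pos rfl, smul_mul_assoc, mul_assoc, hbb, mul_assoc]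
  have g3 : b' * (a k * star (a k)) - q • (b' * (star (b k) * b k)) = 0 := by
    rw [h3, h4]
    linear_combination (norm := module) q • g2
  have g4 := congrArg (b' * ·) g1
  have g5 := congrArg (· * a k) g3
  simp only [mul_sub, mul_smul_comm, sub_mul, smul_mul_assoc, mul_zero, zero_mul, mul_assoc]
    at g4 g5
  linear_combination (norm := module) (1 : ℂ) • g5 - (1 : ℂ) • g4

/-- Within one row, `b k * star (a l) = q • (star (a l) * b k)` for `k ≠ l`. Applying `star` to
`a l * star (b k) = q • (star (b k) * a l)` gives this with the central element
`z = star (q • 1)` in place of `q`. The difference `D = q • 1 - z` satisfies `star D = -D`, and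
comparing the relations with their images under `star` gives `D * (star (a l) * a k) = 0` and
`D * (f * star f) = D * (1 - ∑ a j * star (a j))`. Moving `f * star f` past `a l` and `b k` then
forces `D * (star (a l) * b k) = 0`. -/
lemma same_row_commutation {ι H : Type*} [DecidableEq ι] [Ring H] [Algebra ℂ H] [StarRing H]
    (q : ℂ) (hq1 : q ≠ 1) (S : Finset ι) (k l : ι) (hk : k ∈ S) (hl : l ∈ S)
    (hkl : k ≠ l) (a b : ι → H) (f : H)
    (haa : ∀ j, a l * a j = a j * a l)
    (haas : ∀ i j, a i * star (a j) = (if j = i then 1 else q) • (star (a j) * a i))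
    (hab : ∀ j, a j * b k = (if j = k then q⁻¹ else 1) • (b k * a j))
    (hq : q ≠ 0)
    (habs : ∀ j, a j * star (b k) = q • (star (b k) * a j))
    (haf : a l * f = f * a l) (hafs : a l * star f = q • (star f * a l))
    (hbf : b k * f = f * b k) (hbfs : b k * star f = q • (star f * b k))
    (hrel : f * star f - q • (star f * f)
      = 1 - (∑ j ∈ S, a j * star (a j)) + q • ∑ j ∈ S, star (b j) * b j) :
    b k * star (a l) = q • (star (a l) * b k) := by
  have hq1' : q - 1 ≠ 0 := sub_ne_zero.mpr hq1
  obtain ⟨z, hz⟩ : ∃ z : H, z = star (q • (1 : H)) := ⟨_, rfl⟩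
  have hst : ∀ x : H, star (q • x) = z * star x := by
    intro x
    rw [hz, ← star_mul, mul_smul_comm, mul_one]
  have hzc : ∀ x : H, x * z = z * x := by
    intro x
    have h := hst (star x)
    rw [star_star] at h
    rw [← h, hz]
    nth_rw 1 [← star_star x]
    rw [← star_mul, smul_mul_assoc, one_mul]
  obtain ⟨D, hD⟩ : ∃ D : H, D = q • (1 : H) - z := ⟨_, rfl⟩
  have hDc : ∀ x : H, x * D = D * x := by
    intro x
    rw [hD, mul_sub, sub_mul, hzc, mul_smul_comm, smul_mul_assoc, mul_one, one_mul]
  have hDm : ∀ x : H, D * x = q • x - z * x := by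
    intro x
    rw [hD, sub_mul, smul_mul_assoc, one_mul]
  have hDs : star D = -D := by
    rw [hD, star_sub, hz, star_star]
    abel
  have hbas : ∀ j, b k * star (a j) = z * (star (a j) * b k) := by
    intro j
    have h := congrArg star (habs j)
    simpa only [star_mul, star_star, hst] using h
  have hba : ∀ j, b k * a j = (if j = k then q else 1) • (a j * b k) := by
    intro j
    rw [hab, smul_smul]
    split_ifs <;> simp [hq]
  have hDa : ∀ i, i ≠ l → D * (star (a l) * a i) = 0 := by
    intro i hi
    have h1 := haas i l
    have h2 := congrArg star (haas l i)
    rw [if_neg hi.symm] at h1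
    rw [if_neg hi, hst] at h2
    simp only [star_mul, star_star] at h2
    rw [hDm, ← h1, ← h2, sub_self]
  have hsA : star (∑ j ∈ S, a j * star (a j)) = ∑ j ∈ S, a j * star (a j) := by
    simp [star_sum]
  have hsB : star (∑ j ∈ S, star (b j) * b j) = ∑ j ∈ S, star (b j) * b j := by
    simp [star_sum]
  have e1 := mul_sum_of_twist S l hl (a l) (fun j => a j * star (a j))
    (fun j => a j * star (a j) * a l) 1 q (by
      intro j
      rw [← mul_assoc, haa, mul_assoc, haas, mul_smul_comm, mul_assoc])
  have e3 := mul_sum_of_twist S k hk (b k) (fun j => a j * star (a j))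
    (fun j => z * (a j * star (a j) * b k)) q 1 (by
      intro j
      rw [← mul_assoc, hba, smul_mul_assoc, mul_assoc, hbas, ← mul_assoc, hzc]
      simp only [mul_assoc])
  have e5 : D * (star (a l) * ∑ j ∈ S, a j * star (a j)) = D * (star (a l) * (a l * star (a l))) := by
    simp only [Finset.mul_sum]
    refine Finset.sum_eq_single_of_mem l hl ?_
    intro j _ hj
    rw [← mul_assoc (star (a l)), ← mul_assoc, hDa j hj, zero_mul]
  rw [← Finset.mul_sum, ← Finset.sum_mul] at e3
  rw [← Finset.sum_mul] at e1
  set A := ∑ j ∈ S, a j * star (a j)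
  set B := ∑ j ∈ S, star (b j) * b j
  have hrels := congrArg star hrel
  rw [star_sub, star_add, star_sub, hst, hst, hsA, hsB, star_mul, star_mul, star_star,
    star_one] at hrels
  have hDf : D * (f * star f) = D * (1 - A) := by
    have h1 : D * (star f * f + B) = 0 := by
      rw [hDm, smul_add, mul_add]
      linear_combination (norm := module) (1 : ℂ) • hrels - (1 : ℂ) • hrel
    have h2 : f * star f = (1 - A) + q • (star f * f + B) := by
      linear_combination (norm := module) (1 : ℂ) • hrel
    rw [h2, mul_add, mul_smul_comm, h1, smul_zero, add_zero]
  have h1 : a l * (f * star f) = q • (f * star f * a l) := by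
    rw [← mul_assoc, haf, mul_assoc, hafs, mul_smul_comm, mul_assoc]
  have h2 : b k * (f * star f) = q • (f * star f * b k) := by
    rw [← mul_assoc, hbf, mul_assoc, hbfs, mul_smul_comm, mul_assoc]
  -- After multiplication by `D`, every `x` that moves past `f * star f` with the factor `q` also
  -- moves past `1 - A` with the factor `q`.
  have key : ∀ x : H, x * (f * star f) = q • (f * star f * x) →
      D * (x * (1 - A) - q • ((1 - A) * x)) = 0 := by
    intro x hx
    rw [mul_sub, mul_smul_comm, ← mul_assoc, ← mul_assoc, ← hDf, ← hDc, mul_assoc x, ← hDf,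
      ← mul_assoc, hDc, mul_assoc, hx, mul_smul_comm, mul_assoc D, sub_self]
  have k1 : D * (a l * star (a l) * a l) = D * a l := by
    have h := key _ h1
    rw [mul_sub (a l), e1, sub_mul, mul_one, one_mul] at h
    have h' : (q - 1) • (D * (a l * star (a l) * a l) - D * a l) = 0 := by
      simp only [mul_sub, mul_add, mul_smul_comm, smul_sub] at h
      linear_combination (norm := module) (1 : ℂ) • h
    exact sub_eq_zero.mp ((smul_eq_zero_iff_right hq1').mp h')
  have k2 : D * (star (a l) * (a l * star (a l))) = D * star (a l) := by
    have h := congrArg star k1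
    simp only [star_mul, star_star, hDs, mul_neg, neg_inj, hDc] at h
    exact h
  have k3 := congrArg (star (a l) * ·) (key _ h2)
  have k4 : D * (star (a l) * (a k * star (a k))) = 0 := by
    rw [← mul_assoc (star (a l)), ← mul_assoc, hDa k hkl, zero_mul]
  have m1 : D * (star (a l) * (A * b k)) = D * (star (a l) * b k) := by
    have h := congrArg (· * b k) (e5.trans k2)
    simpa only [mul_assoc] using h
  have m2 : D * (star (a l) * (a k * star (a k) * b k)) = 0 := by
    have h := congrArg (· * b k) k4
    simpa only [mul_assoc, zero_mul] using h
  have hmv : ∀ y : H, star (a l) * (D * y) = D * (star (a l) * y) := by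
    intro y
    rw [← mul_assoc, hDc, mul_assoc]
  have hzmv : ∀ y : H, star (a l) * (z * y) = z * (star (a l) * y) := by
    intro y
    rw [← mul_assoc, hzc, mul_assoc]
  have hDz : ∀ y : H, D * (z * y) = z * (D * y) := by
    intro y
    rw [← mul_assoc, hzc, mul_assoc]
  rw [mul_sub (b k), e3, sub_mul, mul_one, one_mul] at k3
  simp only [hmv, mul_zero, mul_sub, mul_add, mul_smul_comm, smul_sub, hzmv, hDz, one_smul] at k3
  simp only [m1, m2, mul_zero, smul_zero, add_zero] at k3
  set x := D * (star (a l) * b k) with hx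
  have k5 : (1 - z) * x = 0 := by
    rw [sub_mul, one_mul]
    linear_combination (norm := module) (1 : ℂ) • k3
  -- `1 - z = star ((1 - q) • 1)` is invertible.
  have k6 : star ((1 - q)⁻¹ • (1 : H)) * (1 - z) = 1 := by
    have h : (1 : H) - z = star ((1 - q) • (1 : H)) := by
      rw [hz, sub_smul, one_smul, star_sub, star_one]
    rw [h, ← star_mul, smul_mul_smul_comm, mul_one,
      mul_inv_cancel₀ (sub_ne_zero.mpr hq1.symm), one_smul, star_one]
  have k7 : x = 0 := by
    rw [← one_mul x, ← k6, mul_assoc, k5, mul_zero]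
  rw [hbas l]
  rw [hx, hDm] at k7
  exact (sub_eq_zero.mp k7).symm

theorem stmt_9
    {ι : Type*} [DecidableEq ι] (q : ℂ) (hq : q ≠ 0)
    (g : ι → ι → ℂ) (hg : ∀ p p' : ι, g p p' = if p = p' then q else 1)
    {H₁ : Type*} [Ring H₁] [Algebra ℂ H₁] [StarRing H₁]
    (α₁ β₁ : ι → ι → H₁) (f₁ : ι → H₁)
    (hAfin1 : ∀ p, (Function.support (α₁ p)).Finite)
    (hAfin2 : ∀ p, (Function.support (β₁ p)).Finite)
    (hA1 : ∀ p p' k l : ι, α₁ p k * α₁ p' l = α₁ p' l * α₁ p k)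
    (hA2 : ∀ p p' k l : ι, α₁ p k * star (α₁ p' l) = (g p p' * (g k l)⁻¹) • (star (α₁ p' l) * α₁ p k))
    (hA3 : ∀ p p' k l : ι, α₁ p k * β₁ p' l = (g k l)⁻¹ • (β₁ p' l * α₁ p k))
    (hA4 : ∀ p p' k l : ι, α₁ p k * star (β₁ p' l) = g p p' • (star (β₁ p' l) * α₁ p k))
    (hA5 : ∀ p p' k : ι, α₁ p k * f₁ p' = f₁ p' * α₁ p k)
    (hA6 : ∀ p p' k : ι, α₁ p k * star (f₁ p') = g p p' • (star (f₁ p') * α₁ p k))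
    (hA7 : ∀ p p' k l : ι, β₁ p k * β₁ p' l = β₁ p' l * β₁ p k)
    (hA8 : ∀ p p' k l : ι, β₁ p k * star (β₁ p' l) = (g p p' * g k l) • (star (β₁ p' l) * β₁ p k))
    (hA9 : ∀ p p' k : ι, β₁ p k * f₁ p' = f₁ p' * β₁ p k)
    (hA10 : ∀ p p' k : ι, β₁ p k * star (f₁ p') = g p p' • (star (f₁ p') * β₁ p k))
    (hA11 : ∀ p p' : ι, f₁ p * f₁ p' - f₁ p' * f₁ p = ∑ᶠ k, (α₁ p k * β₁ p' k - α₁ p' k * β₁ p k))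
    (hA12 : ∀ p p' : ι, f₁ p * star (f₁ p') - g p p' • (star (f₁ p') * f₁ p)
        = (if p = p' then (1 : ℂ) else 0) • (1 : H₁) - (∑ᶠ k, α₁ p k * star (α₁ p' k))
          + g p p' • ∑ᶠ k, star (β₁ p' k) * β₁ p k)
    {H₂ : Type*} [Ring H₂] [Algebra ℂ H₂] [StarRing H₂]
    (α₂ β₂ : ι → ι → H₂) (f₂ : ι → H₂)
    (hBfin1 : ∀ p, (Function.support (α₂ p)).Finite)
    (hBfin2 : ∀ p, (Function.support (β₂ p)).Finite)
    (hB1 : ∀ p p' k l : ι, α₂ p k * α₂ p' l = α₂ p' l * α₂ p k)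
    (hB2 : ∀ p p' k l : ι, α₂ p k * star (α₂ p' l) = (g p p' * (g k l)⁻¹) • (star (α₂ p' l) * α₂ p k))
    (hB3 : ∀ p p' k l : ι, α₂ p k * β₂ p' l = (g k l)⁻¹ • (β₂ p' l * α₂ p k))
    (hB4 : ∀ p p' k l : ι, α₂ p k * star (β₂ p' l) = g p p' • (star (β₂ p' l) * α₂ p k))
    (hB5 : ∀ p p' k : ι, α₂ p k * f₂ p' = f₂ p' * α₂ p k)
    (hB6 : ∀ p p' k : ι, α₂ p k * star (f₂ p') = g p p' • (star (f₂ p') * α₂ p k))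
    (hB7 : ∀ p p' k l : ι, β₂ p k * β₂ p' l = β₂ p' l * β₂ p k)
    (hB8 : ∀ p p' k l : ι, β₂ p k * star (β₂ p' l) = (g p p' * g k l) • (star (β₂ p' l) * β₂ p k))
    (hB9 : ∀ p p' k : ι, β₂ p k * f₂ p' = f₂ p' * β₂ p k)
    (hB10 : ∀ p p' k : ι, β₂ p k * star (f₂ p') = g p p' • (star (f₂ p') * β₂ p k))
    (hB11 : ∀ p p' : ι, f₂ p * f₂ p' - f₂ p' * f₂ p = ∑ᶠ k, (α₂ p k * β₂ p' k - α₂ p' k * β₂ p k))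
    (hB12 : ∀ p p' : ι, f₂ p * star (f₂ p') - g p p' • (star (f₂ p') * f₂ p)
        = (if p = p' then (1 : ℂ) else 0) • (1 : H₂) - (∑ᶠ k, α₂ p k * star (α₂ p' k))
          + g p p' • ∑ᶠ k, star (β₂ p' k) * β₂ p k)
    (Dα Dβ Dαs Dβs : ι → ι → H₁ ⊗[ℂ] H₂) (Df Dfs : ι → H₁ ⊗[ℂ] H₂)
    (hDα : ∀ p k : ι, Dα p k = (∑ᶠ η, α₁ p η ⊗ₜ[ℂ] α₂ η k) + ∑ᶠ η, β₁ p η ⊗ₜ[ℂ] star (β₂ η k))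
    (hDβ : ∀ p k : ι, Dβ p k = (∑ᶠ η, α₁ p η ⊗ₜ[ℂ] β₂ η k) + ∑ᶠ η, β₁ p η ⊗ₜ[ℂ] star (α₂ η k))
    (hDf : ∀ p : ι, Df p = (∑ᶠ η, α₁ p η ⊗ₜ[ℂ] f₂ η) + (∑ᶠ η, β₁ p η ⊗ₜ[ℂ] star (f₂ η)) + f₁ p ⊗ₜ[ℂ] 1)
    (hDαs : ∀ p k : ι, Dαs p k = (∑ᶠ η, star (α₁ p η) ⊗ₜ[ℂ] star (α₂ η k)) + ∑ᶠ η, star (β₁ p η) ⊗ₜ[ℂ] β₂ η k)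
    (hDβs : ∀ p k : ι, Dβs p k = (∑ᶠ η, star (α₁ p η) ⊗ₜ[ℂ] star (β₂ η k)) + ∑ᶠ η, star (β₁ p η) ⊗ₜ[ℂ] α₂ η k)
    (hDfs : ∀ p : ι, Dfs p
        = (∑ᶠ η, star (α₁ p η) ⊗ₜ[ℂ] star (f₂ η)) + (∑ᶠ η, star (β₁ p η) ⊗ₜ[ℂ] f₂ η) + star (f₁ p) ⊗ₜ[ℂ] 1) :
    ∀ p p' k l : ι, Dβ p k * Dβ p' l = Dβ p' l * Dβ p k := by
  intro p p' k l
  have hgs : ∀ i j, g i j = g j i := by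
    intro i j
    simp only [hg, eq_comm]
  have hgne : ∀ i j, g i j ≠ 0 := by
    intro i j
    rw [hg]
    split_ifs
    exacts [hq, one_ne_zero]
  have hgd : ∀ i, g i i = q := fun i => by rw [hg, if_pos rfl]
  have hgo : ∀ i j, i ≠ j → g i j = 1 := fun i j h => by rw [hg, if_neg h]
  -- Two factors in different rows and the same column annihilate each other.
  have zero₁ : q ≠ 1 → ∀ p p' η, p ≠ p' → β₁ p' η * α₁ p η = 0 := by
    intro hq1 p p' η hp
    set S := (hAfin1 p).toFinset ∪ (hAfin2 p).toFinset ∪ {η} with hS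
    refine other_row_mul_eq_zero q hq hq1 S η (by simp [hS]) (α₁ p) (β₁ p) (f₁ p) (β₁ p' η)
      (fun j => hA1 _ _ _ _) (fun j => ?_) (fun j => ?_) (fun j => ?_) (hA5 _ _ _) ?_
      (fun j => ?_) (fun j => ?_) (fun j => hA7 _ _ _ _) (fun j => ?_) (hA9 _ _ _) ?_ ?_
    · rw [hA2, hgd, hg η j]
      congr 1
      simp only [eq_comm (a := j)]
      split_ifs <;> simp [hq]
    · rw [hA3, hg η j]
      congr 1
      simp only [eq_comm (a := j)]
      split_ifs <;> simp
    · rw [hA4, hgd]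
    · rw [hA6, hgd]
    · rw [hA3, smul_smul, hg j η]
      split_ifs <;> simp [hq]
    · have h := congrArg star (hA4 p p' j η)
      rw [hgo p p' hp, one_smul] at h
      simpa only [star_mul, star_star] using h
    · rw [hA8, hgo p' p hp.symm, one_mul, hgs, hg]
    · rw [hA10, hgo p' p hp.symm, one_smul]
    · have h := hA12 p p
      rw [hgd, if_pos rfl, one_smul] at h
      rw [h, finsum_eq_sum_of_support_subset (s := S), finsum_eq_sum_of_support_subset (s := S)]
      · intro j hj
        have : β₁ p j ≠ 0 := right_ne_zero_of_mul hj
        simp [hS, this]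
      · intro j hj
        have : α₁ p j ≠ 0 := left_ne_zero_of_mul hj
        simp [hS, this]
  have comm₂ : ∀ η k l, k ≠ l → β₂ η k * star (α₂ η l) = q • (star (α₂ η l) * β₂ η k) := by
    intro η k l hkl
    by_cases hq1 : q = 1
    · have h := congrArg star (hB4 η η l k)
      rw [hgd, hq1, one_smul] at h
      rw [hq1, one_smul]
      simpa only [star_mul, star_star] using h
    set S := (hBfin1 η).toFinset ∪ (hBfin2 η).toFinset ∪ {k, l} with hS
    refine same_row_commutation q hq1 S k l (by simp [hS]) (by simp [hS]) hkl (α₂ η) (β₂ η) (f₂ η)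
      (fun j => hB1 _ _ _ _) (fun i j => ?_) (fun j => ?_) hq (fun j => ?_) (hB5 _ _ _) ?_
      (hB9 _ _ _) ?_ ?_
    · rw [hB2, hgd, hg i j]
      congr 1
      simp only [eq_comm (a := j)]
      split_ifs <;> simp [hq]
    · rw [hB3, hg j k]
      congr 1
      split_ifs <;> simp
    · rw [hB4, hgd]
    · rw [hB6, hgd]
    · rw [hB10, hgd]
    · have h := hB12 η η
      rw [hgd, if_pos rfl, one_smul] at h
      rw [h, finsum_eq_sum_of_support_subset (s := S), finsum_eq_sum_of_support_subset (s := S)]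
      · intro j hj
        have : β₂ η j ≠ 0 := right_ne_zero_of_mul hj
        simp [hS, this]
      · intro j hj
        have : α₂ η j ≠ 0 := left_ne_zero_of_mul hj
        simp [hS, this]
  have cross : ∀ p p' k l η θ, ¬ (p = p' ∧ k = l) →
      Commute (α₁ p η ⊗ₜ[ℂ] β₂ η k) (β₁ p' θ ⊗ₜ[ℂ] star (α₂ θ l)) := by
    intro p p' k l η θ hne
    rw [commute_iff_eq, Algebra.TensorProduct.tmul_mul_tmul, Algebra.TensorProduct.tmul_mul_tmul]
    -- The factor `(g η θ)⁻¹` on the left is compensated by a factor `g η θ` on the right.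
    have main : β₂ η k * star (α₂ θ l) = g η θ • (star (α₂ θ l) * β₂ η k) →
        (α₁ p η * β₁ p' θ) ⊗ₜ[ℂ] (β₂ η k * star (α₂ θ l))
          = (β₁ p' θ * α₁ p η) ⊗ₜ[ℂ] (star (α₂ θ l) * β₂ η k) := by
      intro h
      rw [h, hA3, TensorProduct.smul_tmul_smul, inv_mul_cancel₀ (hgne _ _), one_smul]
    have hstar : g θ η = 1 → β₂ η k * star (α₂ θ l) = g η θ • (star (α₂ θ l) * β₂ η k) := by
      intro h1
      have h := congrArg star (hB4 θ η l k)
      rw [h1, one_smul] at h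
      rw [hgs, h1, one_smul]
      simpa only [star_mul, star_star] using h
    by_cases hηθ : η = θ
    · subst hηθ
      by_cases hq1 : q = 1
      · exact main (hstar (by rw [hgd, hq1]))
      by_cases hp : p = p'
      · apply main
        rw [hgd]
        exact comm₂ η k l fun h => hne ⟨hp, h⟩
      · rw [hA3, zero₁ hq1 p p' η hp, smul_zero, TensorProduct.zero_tmul, TensorProduct.zero_tmul]
    · exact main (hstar (hgo _ _ (Ne.symm hηθ)))
  by_cases hpk : p = p' ∧ k = l
  · rw [hpk.1, hpk.2]
  have hsum : ∀ p k, Dβ p k = (∑ η ∈ (hAfin1 p).toFinset, α₁ p η ⊗ₜ[ℂ] β₂ η k)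
      + ∑ η ∈ (hAfin2 p).toFinset, β₁ p η ⊗ₜ[ℂ] star (α₂ η k) := by
    intro p k
    rw [hDβ, finsum_eq_sum_of_support_subset (s := (hAfin1 p).toFinset),
      finsum_eq_sum_of_support_subset (s := (hAfin2 p).toFinset)]
    · intro η hη
      have : β₁ p η ≠ 0 := fun h => hη (by simp [h])
      simpa using this
    · intro η hη
      have : α₁ p η ≠ 0 := fun h => hη (by simp [h])
      simpa using this
  rw [hsum, hsum]
  change Commute _ _
  refine Commute.add_left (Commute.add_right ?_ ?_) (Commute.add_right ?_ ?_) <;>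
    refine Commute.sum_left _ _ _ fun η _ => Commute.sum_right _ _ _ fun θ _ => ?_
  · rw [commute_iff_eq, Algebra.TensorProduct.tmul_mul_tmul, Algebra.TensorProduct.tmul_mul_tmul,
      hA1, hB7]
  · exact cross _ _ _ _ _ _ hpk
  · exact (cross _ _ _ _ _ _ fun h => hpk ⟨h.1.symm, h.2.symm⟩).symm
  · rw [commute_iff_eq, Algebra.TensorProduct.tmul_mul_tmul, Algebra.TensorProduct.tmul_mul_tmul,
      hA7, ← star_mul, ← star_mul, hB1]
end

section
/- The comultiplication preserves the β–f† exchange relation: for all p, p', k ∈ ι one has Δβ p k * Δf⋆ p' = g p p' • (Δf⋆ p' * Δβ p k) in H₁ ⊗[ℂ] H₂. -/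
/-!
Expanding both sides, `Δβ p k * Δf⋆ p'` is a sum of six families of terms, and every term acquires
the factor `g p p'` on its own. Four families use the given relations directly, and
factors `g η ζ` produced in both tensor legs cancel. The other two involve `β₁ * star α₁` and
`star α₂ * f₂`, that is, the stars of given relations. As no compatibility of `star` with
complex scalars is available (and `q` need not be real), applying `star` to `x = q • y` only gives
`star x = star (algebraMap q) * star y`, with a central element that may differ from `q`.

This discrepancy is harmless because the relations are rigid for `q ≠ 1`. Moving `α p l` through
the relation for `f p * star (f p)` yields `α = (α * star α - q • star β * β) * α` for each entry
(`ExchangeRel.α_eq`). The element in parentheses `q`-commutes with `star (f p)`, which forces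
`α p l * star (f p) = 0` (`ExchangeRel.α_mul_fs_eq_zero`), and from this `f p * α p l = 0`
(`ExchangeRel.f_mul_α_eq_zero`). In particular `star (α p l)` and `f p` have zero products in
either order, so any scalar is correct between them (`ExchangeRel.αs_mul_f`).
The identity `ExchangeRel.α_eq` also shows, for `q ≠ 1`, that
`star (algebraMap q) - algebraMap q` annihilates `star (β p k) * α p l` for `k ≠ l`, so
`β p k * star (α p l) = q • (star (α p l) * β p k)` (`ExchangeRel.β_mul_αs`). In the
terms of the comultiplied product with coinciding summation indices `η = ζ`, the other tensor leg
is `star (α₂ η k) * star (f₂ η) = 0`. For `q = 1` all scalars are `1` and there is nothing to correct.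
-/

/-! ### Exchange relations in one algebra -/

/-- The exchange relations of the generators `α`, `β`, `f` of one star algebra that enter the proof.
The stars of these relations are not listed: they follow, but as no compatibility
of `star` with complex scalars is assumed, a scalar `c` turns into the central element
`star (algebraMap ℂ H c)`. -/
structure ExchangeRel {ι : Type*} [DecidableEq ι] (q : ℂ) (g : ι → ι → ℂ) {H : Type*} [Ring H]
    [Algebra ℂ H] [StarRing H] (α β : ι → ι → H) (f : ι → H) : Prop where
  q_ne : q ≠ 0
  g_eq : ∀ p p' : ι, g p p' = if p = p' then q else 1
  fin_α : ∀ p, (Function.support (α p)).Finite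
  fin_β : ∀ p, (Function.support (β p)).Finite
  αα : ∀ p p' k l : ι, α p k * α p' l = α p' l * α p k
  ααs : ∀ p p' k l : ι, α p k * star (α p' l) = (g p p' * (g k l)⁻¹) • (star (α p' l) * α p k)
  αβ : ∀ p p' k l : ι, α p k * β p' l = (g k l)⁻¹ • (β p' l * α p k)
  αβs : ∀ p p' k l : ι, α p k * star (β p' l) = g p p' • (star (β p' l) * α p k)
  αf : ∀ p p' k : ι, α p k * f p' = f p' * α p k
  αfs : ∀ p p' k : ι, α p k * star (f p') = g p p' • (star (f p') * α p k)
  ββ : ∀ p p' k l : ι, β p k * β p' l = β p' l * β p k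
  ββs : ∀ p p' k l : ι, β p k * star (β p' l) = (g p p' * g k l) • (star (β p' l) * β p k)
  βf : ∀ p p' k : ι, β p k * f p' = f p' * β p k
  βfs : ∀ p p' k : ι, β p k * star (f p') = g p p' • (star (f p') * β p k)
  ffs : ∀ p p' : ι, f p * star (f p') - g p p' • (star (f p') * f p)
        = (if p = p' then (1 : ℂ) else 0) • (1 : H) - (∑ᶠ k, α p k * star (α p' k))
          + g p p' • ∑ᶠ k, star (β p' k) * β p k

namespace ExchangeRel

variable {ι : Type*} [DecidableEq ι] {q : ℂ} {g : ι → ι → ℂ} {H : Type*} [Ring H]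
  [Algebra ℂ H] [StarRing H] {α β : ι → ι → H} {f : ι → H}

lemma g_self (h : ExchangeRel q g α β f) (p : ι) : g p p = q := by simp [h.g_eq]

lemma g_ne (h : ExchangeRel q g α β f) {p p' : ι} (hp : p ≠ p') : g p p' = 1 := by
  simp [h.g_eq, hp]

/-! ### Rigidity of the relations for `q ≠ 1` -/

lemma α_mul_sum_αα (h : ExchangeRel q g α β f) (p l : ι) :
    α p l * (∑ᶠ k, α p k * star (α p k))
      = q • ((∑ᶠ k, α p k * star (α p k)) * α p l)
        + (1 - q) • (α p l * star (α p l) * α p l) := by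
  have hS : Function.support (fun k => α p k * star (α p k)) ⊆
      ((insert l (h.fin_α p).toFinset : Finset ι) : Set ι) := by
    intro k hk
    have : α p k ≠ 0 := fun h0 => hk (by simp [h0])
    simp [this]
  rw [finsum_eq_sum_of_support_subset _ hS, Finset.mul_sum, Finset.sum_mul, Finset.smul_sum]
  rw [← Finset.sum_ite_eq_of_mem' (insert l (h.fin_α p).toFinset) l
    (fun _ => (1 - q) • (α p l * star (α p l) * α p l)) (by simp), ← Finset.sum_add_distrib]
  refine Finset.sum_congr rfl fun k _ => ?_
  rw [← mul_assoc, h.αα p p l k, mul_assoc, h.ααs, mul_smul_comm, ← mul_assoc, h.g_self]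
  split_ifs with hk
  · subst hk
    rw [h.g_self, mul_inv_cancel₀ h.q_ne]
    module
  · rw [h.g_ne (Ne.symm hk)]
    simp

lemma α_mul_sum_ββ (h : ExchangeRel q g α β f) (p l : ι) :
    α p l * (∑ᶠ k, star (β p k) * β p k)
      = q • ((∑ᶠ k, star (β p k) * β p k) * α p l)
        + (1 - q) • (star (β p l) * β p l * α p l) := by
  have hS : Function.support (fun k => star (β p k) * β p k) ⊆
      ((insert l (h.fin_β p).toFinset : Finset ι) : Set ι) := by
    intro k hk
    have : β p k ≠ 0 := fun h0 => hk (by simp [h0])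
    simp [this]
  rw [finsum_eq_sum_of_support_subset _ hS, Finset.mul_sum, Finset.sum_mul, Finset.smul_sum]
  rw [← Finset.sum_ite_eq_of_mem' (insert l (h.fin_β p).toFinset) l
    (fun _ => (1 - q) • (star (β p l) * β p l * α p l)) (by simp), ← Finset.sum_add_distrib]
  refine Finset.sum_congr rfl fun k _ => ?_
  rw [← mul_assoc, h.αβs, smul_mul_assoc, mul_assoc, h.αβ, mul_smul_comm, ← mul_assoc, h.g_self,
    smul_smul]
  split_ifs with hk
  · subst hk
    rw [h.g_self, mul_inv_cancel₀ h.q_ne]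
    module
  · rw [h.g_ne (Ne.symm hk)]
    simp

/-- Comparing `α p l` with both sides of the relation for `f p * star (f p)` gives, for `q ≠ 1`,
a relation inside the algebra generated by `α p l` and `β p l`. -/
lemma α_eq (h : ExchangeRel q g α β f) (hq1 : q ≠ 1) (p l : ι) :
    (α p l * star (α p l) - q • (star (β p l) * β p l)) * α p l = α p l := by
  have hw : α p l * (f p * star (f p) - q • (star (f p) * f p))
      = q • ((f p * star (f p) - q • (star (f p) * f p)) * α p l) := by
    have h1 : α p l * (f p * star (f p)) = q • (f p * star (f p) * α p l) := by
      rw [← mul_assoc, h.αf, mul_assoc, h.αfs, mul_smul_comm, h.g_self, mul_assoc]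
    have h2 : α p l * (star (f p) * f p) = q • (star (f p) * f p * α p l) := by
      rw [← mul_assoc, h.αfs, smul_mul_assoc, mul_assoc, h.αf, h.g_self, mul_assoc]
    simp only [mul_sub, sub_mul, mul_smul_comm, smul_mul_assoc, h1, h2]
    module
  have h12 := h.ffs p p
  rw [h.g_self, if_pos rfl, one_smul] at h12
  rw [h12] at hw
  simp only [mul_sub, mul_add, sub_mul, add_mul, mul_smul_comm, smul_mul_assoc, mul_one, one_mul,
    h.α_mul_sum_αα, h.α_mul_sum_ββ] at hw
  have h1q : (1 - q) ≠ 0 := sub_ne_zero.2 hq1.symm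
  refine smul_right_injective H h1q ?_
  simp only [sub_mul, smul_mul_assoc]
  linear_combination (norm := module) -hw

lemma αs_mul_fs (h : ExchangeRel q g α β f) (p p' k : ι) :
    star (α p k) * star (f p') = star (f p') * star (α p k) := by
  simpa using congrArg star (h.αf p p' k).symm

/-- The products of `α p k` with `star (f p)` vanish for `q ≠ 1`: commuting the element of `α_eq`,
which fixes `α p k`, past `star (f p)` produces an additional factor `q`. -/
lemma α_mul_fs_eq_zero (h : ExchangeRel q g α β f) (hq1 : q ≠ 1) (p k : ι) :
    α p k * star (f p) = 0 ∧ star (f p) * α p k = 0 := by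
  set z := α p k * star (α p k) - q • (star (β p k) * β p k) with hz
  have hzα : z * α p k = α p k := h.α_eq hq1 p k
  have hβs : star (β p k) * star (f p) = star (f p) * star (β p k) := by
    simpa using congrArg star (h.βf p p k).symm
  have hzf : z * star (f p) = q • (star (f p) * z) := by
    have h1 : α p k * star (α p k) * star (f p) = q • (star (f p) * (α p k * star (α p k))) := by
      rw [mul_assoc, h.αs_mul_fs, ← mul_assoc, h.αfs, h.g_self, smul_mul_assoc, mul_assoc]
    have h2 : star (β p k) * β p k * star (f p)
        = q • (star (f p) * (star (β p k) * β p k)) := by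
      rw [mul_assoc, h.βfs, h.g_self, mul_smul_comm, ← mul_assoc, hβs, mul_assoc]
    rw [hz, sub_mul, smul_mul_assoc, h1, h2, mul_sub, mul_smul_comm]
    module
  have hαf := h.αfs p p k
  rw [h.g_self] at hαf
  have key : α p k * star (f p) = q • (α p k * star (f p)) := by
    calc α p k * star (f p) = z * (α p k * star (f p)) := by rw [← mul_assoc, hzα]
      _ = q • (q • (star (f p) * (z * α p k))) := by
        rw [hαf, mul_smul_comm, ← mul_assoc, hzf, smul_mul_assoc, mul_assoc]
      _ = q • (α p k * star (f p)) := by rw [hzα, hαf]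
  have h0 : α p k * star (f p) = 0 := by
    have h1q : (1 - q) ≠ 0 := sub_ne_zero.2 hq1.symm
    have : (1 - q) • (α p k * star (f p)) = 0 := by
      rw [sub_smul, one_smul, ← key, sub_self]
    exact (smul_eq_zero_iff_right h1q).1 this
  refine ⟨h0, ?_⟩
  rw [hαf] at h0
  exact (smul_eq_zero_iff_right h.q_ne).1 h0

/-- `f p * α p k` vanishes for `q ≠ 1`. -/
lemma f_mul_α_eq_zero (h : ExchangeRel q g α β f) (hq1 : q ≠ 1) (p k : ι) :
    f p * α p k = 0 := by
  have hfa : f p * star (α p k) = 0 := by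
    simpa using congrArg star (h.α_mul_fs_eq_zero hq1 p k).1
  have haf : star (α p k) * f p = 0 := by
    simpa using congrArg star (h.α_mul_fs_eq_zero hq1 p k).2
  have hz := h.α_eq hq1 p k
  have e1 : f p * α p k = -(q • (f p * (star (β p k) * (β p k * α p k)))) := by
    have e : f p * (α p k * star (α p k)) = 0 := by
      rw [← mul_assoc, ← h.αf, mul_assoc, hfa, mul_zero]
    conv_lhs => rw [← hz]
    rw [← mul_assoc, mul_sub, e, zero_sub, mul_smul_comm, neg_mul, smul_mul_assoc]
    simp only [mul_assoc]
  have e2 : f p * α p k = -(q • (star (β p k) * (f p * (β p k * α p k)))) := by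
    rw [← h.αf]
    conv_lhs => rw [← hz]
    rw [mul_assoc, h.αf, sub_mul, mul_assoc (α p k), ← mul_assoc (star (α p k)), haf, zero_mul,
      mul_zero, zero_sub, smul_mul_assoc, mul_assoc (star (β p k)), ← mul_assoc (β p k), h.βf,
      mul_assoc (f p)]
  -- The star of the relation between `β` and `star f` compares the two expressions.
  have hfb : f p * star (β p k) = star (algebraMap ℂ H q) * (star (β p k) * f p) := by
    have := congrArg star (h.βfs p p k)
    rw [h.g_self, Algebra.smul_def, Algebra.commutes, star_mul, star_mul, star_mul,
      star_star] at this
    exact this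
  set X := star (β p k) * (f p * (β p k * α p k)) with hX
  have e3 : f p * (star (β p k) * (β p k * α p k)) = star (algebraMap ℂ H q) * X := by
    rw [← mul_assoc, hfb, hX]
    simp only [mul_assoc]
  have e4 : X = star (algebraMap ℂ H q) * X := by
    rw [e3] at e1
    exact smul_right_injective H h.q_ne (neg_injective (e2.symm.trans e1))
  clear_value X
  have hX0 : X = 0 := by
    have h5 := congrArg star e4
    rw [star_mul, star_star, ← Algebra.commutes, ← Algebra.smul_def] at h5
    have h6 : (1 - q) • star X = 0 := by
      rw [sub_smul, one_smul, ← h5, sub_self]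
    exact star_eq_zero.1 ((smul_eq_zero_iff_right (sub_ne_zero.2 hq1.symm)).1 h6)
  rw [e2, hX0, smul_zero, neg_zero]

/-! ### Stars of the exchange relations -/

lemma αs_mul_fs_eq_zero (h : ExchangeRel q g α β f) (hq1 : q ≠ 1) (p k : ι) :
    star (α p k) * star (f p) = 0 := by
  simpa using congrArg star (h.f_mul_α_eq_zero hq1 p k)

/-- The star of the relation between `α` and `star f`, with the scalar itself in place of its star:
the discrepancy is absorbed by the vanishing of both products. -/
lemma αs_mul_f (h : ExchangeRel q g α β f) (p p' k : ι) :
    star (α p k) * f p' = (g p p')⁻¹ • (f p' * star (α p k)) := by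
  by_cases hq1 : g p p' = 1
  · have := congrArg star (h.αfs p p' k)
    rw [hq1, one_smul] at this
    rw [hq1, inv_one, one_smul]
    simpa using this.symm
  · have hp : p = p' := by
      by_contra hp
      exact hq1 (h.g_ne hp)
    subst hp
    rw [h.g_self] at hq1
    have h1 : f p * star (α p k) = 0 := by
      simpa using congrArg star (h.α_mul_fs_eq_zero hq1 p k).1
    have h2 : star (α p k) * f p = 0 := by
      simpa using congrArg star (h.α_mul_fs_eq_zero hq1 p k).2
    rw [h1, h2, smul_zero]

/-- The star of the relation between `α` and `star β`, with the scalar itself in place of its star.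
For `p = p'` and `k ≠ l` the defect `star (algebraMap ℂ H q) - algebraMap ℂ H q` annihilates
`star (β p k) * α p l`, by `α_eq`. -/
lemma β_mul_αs (h : ExchangeRel q g α β f) (p p' : ι) {k l : ι} (hkl : q = 1 ∨ k ≠ l) :
    β p k * star (α p' l) = g p p' • (star (α p' l) * β p k) := by
  by_cases hg1 : g p p' = 1
  · have := congrArg star (h.αβs p' p l k)
    have hg1' : g p' p = 1 := by rw [h.g_eq] at hg1 ⊢; simpa [eq_comm] using hg1
    rw [hg1', one_smul] at this
    rw [hg1, one_smul]
    simpa using this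
  · have hp : p = p' := by
      by_contra hp
      exact hg1 (h.g_ne hp)
    subst hp
    rw [h.g_self] at hg1 ⊢
    have hkl : k ≠ l := hkl.resolve_left hg1
    set s : H := star (algebraMap ℂ H q) with hs
    have hsc : ∀ x : H, s * x = x * s := fun x => by
      simpa [hs] using congrArg star (Algebra.commutes q (star x)).symm
    set t : H := s - algebraMap ℂ H q with ht
    have htc : ∀ x : H, t * x = x * t := fun x => by
      rw [ht, sub_mul, mul_sub, hsc, Algebra.commutes]
    have hββ : ∀ i j : ι, i ≠ j → β p i * star (β p j) = q • (star (β p j) * β p i) := by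
      intro i j hij
      rw [h.ββs, h.g_self, h.g_ne hij, mul_one]
    have hαβs : α p l * star (β p k) = q • (star (β p k) * α p l) := by
      rw [h.αβs, h.g_self]
    -- `star (β p k) * β p l` satisfies both an exchange relation and the star of one.
    have htβ : t * (star (β p k) * β p l) = 0 := by
      have h1 := congrArg star (hββ k l hkl)
      simp only [Algebra.smul_def, star_mul, star_star] at h1
      rw [← hs, ← hsc,
        hββ l k hkl.symm, Algebra.smul_def] at h1
      rw [ht, sub_mul, ← h1, sub_self]
    have hba : star (β p k) * star (α p l) = star (α p l) * star (β p k) := by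
      have := congrArg star (h.αβ p p l k)
      rw [h.g_ne hkl.symm, inv_one, one_smul] at this
      simpa using this
    have hbb : star (β p k) * star (β p l) = star (β p l) * star (β p k) := by
      simpa using congrArg star (h.ββ p p l k)
    have hz := h.α_eq hg1 p l
    set b := star (β p k)
    set a := star (α p l)
    set c := α p l
    set B := star (β p l)
    have htb : ∀ u v : H, t * (u * (b * (β p l * v))) = 0 := fun u v => by
      rw [← mul_assoc, htc, mul_assoc, ← mul_assoc b, ← mul_assoc t, htβ, zero_mul, mul_zero]
    have f1 : t * (b * c) = t * (b * (c * (a * c))) := by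
      conv_lhs => rw [← hz]
      have : b * (B * (β p l * c)) = B * (b * (β p l * c)) := by
        rw [← mul_assoc, hbb, mul_assoc]
      simp only [sub_mul, mul_sub, smul_mul_assoc, mul_smul_comm, mul_assoc, this, htb, smul_zero,
        sub_zero]
    have f2 : t * (c * b) = t * (c * (a * (c * b))) := by
      conv_lhs => rw [← hz]
      have : B * (β p l * (c * b)) = (q * q) • (B * (b * (β p l * c))) := by
        rw [hαβs, mul_smul_comm, ← mul_assoc (β p l), hββ l k hkl.symm, smul_mul_assoc,
          mul_smul_comm, mul_smul_comm, smul_smul, mul_assoc]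
      simp only [sub_mul, mul_sub, smul_mul_assoc, mul_smul_comm, mul_assoc, this, htb, smul_zero,
        sub_zero]
    have f3 : c * (a * (c * b)) = (q * q) • (b * (c * (a * c))) := by
      rw [hαβs, mul_smul_comm, ← mul_assoc a, ← hba, mul_smul_comm, mul_assoc b, ← mul_assoc c,
        hαβs, smul_mul_assoc, smul_smul, mul_assoc]
    have f4 : t * (b * c) = 0 := by
      rw [f3, hαβs, mul_smul_comm, mul_smul_comm, ← f1] at f2
      have f5 : (q * (1 - q)) • (t * (b * c)) = 0 := by
        linear_combination (norm := module) f2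
      exact (smul_eq_zero_iff_right
        (mul_ne_zero h.q_ne (sub_ne_zero.2 (Ne.symm hg1)))).1 f5
    have f6 : c * b = s * (b * c) := by
      rw [hαβs, Algebra.smul_def]
      rw [ht, sub_mul, sub_eq_zero] at f4
      exact f4.symm
    have f7 := congrArg star f6
    simp only [star_mul, hs, star_star] at f7
    rw [← Algebra.commutes, ← Algebra.smul_def] at f7
    simpa only [b, star_star] using f7

end ExchangeRel

/-! ### The comultiplied relation -/

open scoped TensorProduct in
lemma finsum_tmul_eq_sum {ι A B : Type*} [Ring A] [Algebra ℂ A] [Ring B] [Algebra ℂ B]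
    (u : ι → A) (v : ι → B) (S : Finset ι) (hS : ∀ i, u i ≠ 0 → i ∈ S) :
    ∑ᶠ i, u i ⊗ₜ[ℂ] v i = ∑ i ∈ S, u i ⊗ₜ[ℂ] v i := by
  refine finsum_eq_sum_of_support_subset _ fun i hi => hS i fun h0 => hi ?_
  simp [h0]

open scoped TensorProduct

theorem stmt_12
    {ι : Type*} [DecidableEq ι] (q : ℂ) (hq : q ≠ 0)
    (g : ι → ι → ℂ) (hg : ∀ p p' : ι, g p p' = if p = p' then q else 1)
    {H₁ : Type*} [Ring H₁] [Algebra ℂ H₁] [StarRing H₁]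
    (α₁ β₁ : ι → ι → H₁) (f₁ : ι → H₁)
    (hAfin1 : ∀ p, (Function.support (α₁ p)).Finite)
    (hAfin2 : ∀ p, (Function.support (β₁ p)).Finite)
    (hA1 : ∀ p p' k l : ι, α₁ p k * α₁ p' l = α₁ p' l * α₁ p k)
    (hA2 : ∀ p p' k l : ι, α₁ p k * star (α₁ p' l) = (g p p' * (g k l)⁻¹) • (star (α₁ p' l) * α₁ p k))
    (hA3 : ∀ p p' k l : ι, α₁ p k * β₁ p' l = (g k l)⁻¹ • (β₁ p' l * α₁ p k))
    (hA4 : ∀ p p' k l : ι, α₁ p k * star (β₁ p' l) = g p p' • (star (β₁ p' l) * α₁ p k))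
    (hA5 : ∀ p p' k : ι, α₁ p k * f₁ p' = f₁ p' * α₁ p k)
    (hA6 : ∀ p p' k : ι, α₁ p k * star (f₁ p') = g p p' • (star (f₁ p') * α₁ p k))
    (hA7 : ∀ p p' k l : ι, β₁ p k * β₁ p' l = β₁ p' l * β₁ p k)
    (hA8 : ∀ p p' k l : ι, β₁ p k * star (β₁ p' l) = (g p p' * g k l) • (star (β₁ p' l) * β₁ p k))
    (hA9 : ∀ p p' k : ι, β₁ p k * f₁ p' = f₁ p' * β₁ p k)
    (hA10 : ∀ p p' k : ι, β₁ p k * star (f₁ p') = g p p' • (star (f₁ p') * β₁ p k))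
    (hA11 : ∀ p p' : ι, f₁ p * f₁ p' - f₁ p' * f₁ p = ∑ᶠ k, (α₁ p k * β₁ p' k - α₁ p' k * β₁ p k))
    (hA12 : ∀ p p' : ι, f₁ p * star (f₁ p') - g p p' • (star (f₁ p') * f₁ p)
        = (if p = p' then (1 : ℂ) else 0) • (1 : H₁) - (∑ᶠ k, α₁ p k * star (α₁ p' k))
          + g p p' • ∑ᶠ k, star (β₁ p' k) * β₁ p k)
    {H₂ : Type*} [Ring H₂] [Algebra ℂ H₂] [StarRing H₂]
    (α₂ β₂ : ι → ι → H₂) (f₂ : ι → H₂)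
    (hBfin1 : ∀ p, (Function.support (α₂ p)).Finite)
    (hBfin2 : ∀ p, (Function.support (β₂ p)).Finite)
    (hB1 : ∀ p p' k l : ι, α₂ p k * α₂ p' l = α₂ p' l * α₂ p k)
    (hB2 : ∀ p p' k l : ι, α₂ p k * star (α₂ p' l) = (g p p' * (g k l)⁻¹) • (star (α₂ p' l) * α₂ p k))
    (hB3 : ∀ p p' k l : ι, α₂ p k * β₂ p' l = (g k l)⁻¹ • (β₂ p' l * α₂ p k))
    (hB4 : ∀ p p' k l : ι, α₂ p k * star (β₂ p' l) = g p p' • (star (β₂ p' l) * α₂ p k))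
    (hB5 : ∀ p p' k : ι, α₂ p k * f₂ p' = f₂ p' * α₂ p k)
    (hB6 : ∀ p p' k : ι, α₂ p k * star (f₂ p') = g p p' • (star (f₂ p') * α₂ p k))
    (hB7 : ∀ p p' k l : ι, β₂ p k * β₂ p' l = β₂ p' l * β₂ p k)
    (hB8 : ∀ p p' k l : ι, β₂ p k * star (β₂ p' l) = (g p p' * g k l) • (star (β₂ p' l) * β₂ p k))
    (hB9 : ∀ p p' k : ι, β₂ p k * f₂ p' = f₂ p' * β₂ p k)
    (hB10 : ∀ p p' k : ι, β₂ p k * star (f₂ p') = g p p' • (star (f₂ p') * β₂ p k))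
    (hB11 : ∀ p p' : ι, f₂ p * f₂ p' - f₂ p' * f₂ p = ∑ᶠ k, (α₂ p k * β₂ p' k - α₂ p' k * β₂ p k))
    (hB12 : ∀ p p' : ι, f₂ p * star (f₂ p') - g p p' • (star (f₂ p') * f₂ p)
        = (if p = p' then (1 : ℂ) else 0) • (1 : H₂) - (∑ᶠ k, α₂ p k * star (α₂ p' k))
          + g p p' • ∑ᶠ k, star (β₂ p' k) * β₂ p k)
    (Dα Dβ Dαs Dβs : ι → ι → H₁ ⊗[ℂ] H₂) (Df Dfs : ι → H₁ ⊗[ℂ] H₂)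
    (hDα : ∀ p k : ι, Dα p k = (∑ᶠ η, α₁ p η ⊗ₜ[ℂ] α₂ η k) + ∑ᶠ η, β₁ p η ⊗ₜ[ℂ] star (β₂ η k))
    (hDβ : ∀ p k : ι, Dβ p k = (∑ᶠ η, α₁ p η ⊗ₜ[ℂ] β₂ η k) + ∑ᶠ η, β₁ p η ⊗ₜ[ℂ] star (α₂ η k))
    (hDf : ∀ p : ι, Df p = (∑ᶠ η, α₁ p η ⊗ₜ[ℂ] f₂ η) + (∑ᶠ η, β₁ p η ⊗ₜ[ℂ] star (f₂ η)) + f₁ p ⊗ₜ[ℂ] 1)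
    (hDαs : ∀ p k : ι, Dαs p k = (∑ᶠ η, star (α₁ p η) ⊗ₜ[ℂ] star (α₂ η k)) + ∑ᶠ η, star (β₁ p η) ⊗ₜ[ℂ] β₂ η k)
    (hDβs : ∀ p k : ι, Dβs p k = (∑ᶠ η, star (α₁ p η) ⊗ₜ[ℂ] star (β₂ η k)) + ∑ᶠ η, star (β₁ p η) ⊗ₜ[ℂ] α₂ η k)
    (hDfs : ∀ p : ι, Dfs p
        = (∑ᶠ η, star (α₁ p η) ⊗ₜ[ℂ] star (f₂ η)) + (∑ᶠ η, star (β₁ p η) ⊗ₜ[ℂ] f₂ η) + star (f₁ p) ⊗ₜ[ℂ] 1) :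
    ∀ p p' k : ι, Dβ p k * Dfs p' = g p p' • (Dfs p' * Dβ p k) := by
  intro p p' k
  have h₁ : ExchangeRel q g α₁ β₁ f₁ :=
    ⟨hq, hg, hAfin1, hAfin2, hA1, hA2, hA3, hA4, hA5, hA6, hA7, hA8, hA9, hA10, hA12⟩
  have h₂ : ExchangeRel q g α₂ β₂ f₂ :=
    ⟨hq, hg, hBfin1, hBfin2, hB1, hB2, hB3, hB4, hB5, hB6, hB7, hB8, hB9, hB10, hB12⟩
  have hgn : ∀ i j, g i j ≠ 0 := fun i j => by
    rw [hg]; split_ifs <;> simp [hq]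
  rw [hDβ, hDfs,
    finsum_tmul_eq_sum (α₁ p) _ (hAfin1 p).toFinset (by simp),
    finsum_tmul_eq_sum (β₁ p) _ (hAfin2 p).toFinset (by simp),
    finsum_tmul_eq_sum (fun η => star (α₁ p' η)) _ (hAfin1 p').toFinset (by simp),
    finsum_tmul_eq_sum (fun η => star (β₁ p' η)) _ (hAfin2 p').toFinset (by simp)]
  -- Each of the six pairs of summands exchanges on its own, even term by term.
  have exch : ∀ {S T : Finset ι} {u v : ι → H₁ ⊗[ℂ] H₂},
      (∀ i j, u i * v j = g p p' • (v j * u i)) →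
      (∑ i ∈ S, u i) * (∑ j ∈ T, v j) = g p p' • ((∑ j ∈ T, v j) * ∑ i ∈ S, u i) := by
    intro S T u v huv
    rw [Finset.sum_mul_sum, Finset.sum_mul_sum, Finset.smul_sum, Finset.sum_comm]
    refine Finset.sum_congr rfl fun j _ => ?_
    rw [Finset.smul_sum]
    exact Finset.sum_congr rfl fun i _ => huv i j
  have exch' : ∀ {S : Finset ι} {u : ι → H₁ ⊗[ℂ] H₂} {v : H₁ ⊗[ℂ] H₂},
      (∀ i, u i * v = g p p' • (v * u i)) →
      (∑ i ∈ S, u i) * v = g p p' • (v * ∑ i ∈ S, u i) := by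
    intro S u v huv
    rw [Finset.sum_mul, Finset.mul_sum, Finset.smul_sum]
    exact Finset.sum_congr rfl fun i _ => huv i
  simp only [mul_add, add_mul, smul_add]
  rw [exch (S := (hAfin1 p).toFinset) (T := (hAfin1 p').toFinset),
    exch (S := (hAfin1 p).toFinset) (T := (hAfin2 p').toFinset),
    exch (S := (hAfin2 p).toFinset) (T := (hAfin1 p').toFinset),
    exch (S := (hAfin2 p).toFinset) (T := (hAfin2 p').toFinset),
    exch' (S := (hAfin1 p).toFinset), exch' (S := (hAfin2 p).toFinset)]
  · abel
  · intro i
    simp only [Algebra.TensorProduct.tmul_mul_tmul, hA10, mul_one, one_mul, TensorProduct.smul_tmul']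
  · intro i
    simp only [Algebra.TensorProduct.tmul_mul_tmul, hA6, mul_one, one_mul, TensorProduct.smul_tmul']
  · intro i j
    simp only [Algebra.TensorProduct.tmul_mul_tmul]
    rw [hA8, h₂.αs_mul_f, TensorProduct.smul_tmul_smul, mul_assoc, mul_inv_cancel₀ (hgn i j),
      mul_one]
  · intro i j
    simp only [Algebra.TensorProduct.tmul_mul_tmul]
    by_cases hij : q = 1 ∨ i ≠ j
    · rw [h₁.β_mul_αs p p' hij, h₂.αs_mul_fs, TensorProduct.smul_tmul']
    · push Not at hij
      -- The second tensor factors vanish when `q ≠ 1`.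
      obtain ⟨hq1, rfl⟩ := hij
      rw [← h₂.αs_mul_fs, h₂.αs_mul_fs_eq_zero hq1]
      simp
  · intro i j
    simp only [Algebra.TensorProduct.tmul_mul_tmul, hA4, hB9, TensorProduct.smul_tmul']
  · intro i j
    simp only [Algebra.TensorProduct.tmul_mul_tmul]
    rw [hA2, hB10, TensorProduct.smul_tmul_smul, mul_assoc, inv_mul_cancel₀ (hgn i j), mul_one]
end
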